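/- arXiv:2307.07809 — 4 statements merged into one kernel-verified Lean document; each statement's English description precedes it below -/
import Mathlib

section
/- Let m and ℓ be positive integers. If α, β ∈ G(m,ℓ) satisfy α^n = β^n for some nonzero integer n, then α and β are conjugate in G(m,ℓ). -/
/-- The word `a_i a_{i+1} ⋯ a_{i+p-1}` (indices mod `m`) in the free group on `ZMod m`. -/
def circWord (m : ℕ) (i : ZMod m) (p : ℕ) : FreeGroup (ZMod m) :=
  ((List.range p).map (fun k => FreeGroup.of (i + (k : ZMod m)))).prod

/-- The defining relations of the circular group `G(m,ℓ)`. -/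
def circRels (m ℓ : ℕ) : Set (FreeGroup (ZMod m)) :=
  { r | ∃ i : ZMod m, r = circWord m i ℓ * (circWord m (i + 1) ℓ)⁻¹ }

/-- The circular group `G(m,ℓ)`. -/
abbrev CircularGroup (m ℓ : ℕ) := PresentedGroup (circRels m ℓ)

/-- The generator `a_i` of the circular group `G(m,ℓ)`. -/
def circGen (m ℓ : ℕ) (i : ZMod m) : CircularGroup m ℓ :=
  PresentedGroup.of i

/-- The element `s(i,p) = a_i a_{i+1} ⋯ a_{i+p-1}` of the circular group `G(m,ℓ)`. -/
def circS (m ℓ : ℕ) (i : ZMod m) (p : ℕ) : CircularGroup m ℓ :=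
  ((List.range p).map (fun k => circGen m ℓ (i + (k : ZMod m)))).prod

/-- The Garside element `Δ = s(0,ℓ)` of the circular group `G(m,ℓ)`. -/
def circDelta (m ℓ : ℕ) : CircularGroup m ℓ := circS m ℓ 0 ℓ

/-!
Adjoining to `G = G(m,ℓ)` the automorphism `τ : a_i ↦ a_{i+1}` gives, with `u = a_0 τ`, the group
`P = ⟨τ, u | τ^m = 1, u^ℓ τ = τ u^ℓ⟩`, a central extension of the free product `C_m * C_ℓ` by the
powers of `u^ℓ`. Since `u` has degree one, projection and degree embed `P` into `(C_m * C_ℓ) × ℤ`.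

In a free product of abelian groups, commuting is transitive on nontrivial elements. So, if
`α^n = β^n` is nontrivial in `C_m * C_ℓ`, then `α` and `β` commute and `(α β⁻¹)^n = 1`. Otherwise
`α` and `β` are torsion in `C_m * C_ℓ`, hence conjugate there into the factors. The conjugator can
be corrected by a power of `τ` or `u` so as to lie in `G`, and then `α` and `β`, which have the same
degree `d`, are both conjugate in `G` to `τ^{-d} u^d`. In particular `G` is torsion-free, which
settles the first case.
-/

open Monoid

theorem freeMonoid_length_pow {X : Type*} (w : FreeMonoid X) (n : ℕ) :
    (w ^ n).length = n * w.length := by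
  induction n with
  | zero => simp
  | succ n ih => rw [pow_succ, FreeMonoid.length_mul, ih, Nat.succ_mul]

/-- A monoid is commutation transitive if commuting is a transitive relation on its nontrivial
elements. -/
def IsCommutationTransitive (M : Type*) [Monoid M] : Prop :=
  ∀ ⦃a b c : M⦄, c ≠ 1 → Commute a c → Commute b c → Commute a b

namespace IsCommutationTransitive

theorem of_commMonoid (M : Type*) [CommMonoid M] : IsCommutationTransitive M :=
  fun a b _ _ _ _ => Commute.all a b

theorem freeMonoid (X : Type*) : IsCommutationTransitive (FreeMonoid X) := by
  intro a b c hc ha hb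
  -- A word commuting with `c` is a prefix of a power of `c`, so it is determined by its length.
  have isPrefix_pow {w : FreeMonoid X} (hw : Commute w c) : w.toList <+: (c ^ w.length).toList := by
    have hlen : w.length ≤ (c ^ w.length).length := by
      rw [freeMonoid_length_pow]
      exact Nat.le_mul_of_pos_right _ (Nat.pos_of_ne_zero (mt FreeMonoid.length_eq_zero.1 hc))
    exact List.prefix_of_prefix_length_le
      ⟨(c ^ w.length).toList, congrArg FreeMonoid.toList (hw.pow_right w.length).eq⟩
      (List.prefix_append _ w.toList) hlen
  have hlen : (a * b).length = (b * a).length := by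
    rw [FreeMonoid.length_mul, FreeMonoid.length_mul, add_comm]
  have hab := isPrefix_pow (ha.mul_left hb)
  have hba := isPrefix_pow (hb.mul_left ha)
  rw [← hlen] at hba
  exact FreeMonoid.toList.injective
    ((List.prefix_of_prefix_length_le hab hba hlen.le).eq_of_length hlen)

end IsCommutationTransitive

section FreeProduct

variable {ι : Type*} {G : ι → Type*} [∀ i, Group (G i)]

open Classical in
/-- The reduced word of an element of a free product, as an element of the free monoid on the
letters. -/
noncomputable def syllables (g : CoprodI G) : FreeMonoid (Σ i, G i) :=
  FreeMonoid.ofList (CoprodI.Word.equiv g).toList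

/-- The reduced word of `g` is nonempty, starts with a letter of `G i` and ends with a letter
of `G j`. -/
def HasReducedWord (i j : ι) (g : CoprodI G) : Prop :=
  ∃ w : CoprodI.NeWord G i j, w.prod = g

theorem syllables_injective : Function.Injective (syllables : CoprodI G → _) := by
  classical
  exact fun g h hgh => CoprodI.Word.equiv.injective (CoprodI.Word.ext hgh)

theorem syllables_one : syllables (1 : CoprodI G) = 1 := by
  simp [syllables, CoprodI.Word.equiv, CoprodI.Word.empty]

theorem syllables_neWord_prod {i j : ι} (w : CoprodI.NeWord G i j) :
    syllables w.prod = FreeMonoid.ofList w.toList := by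
  classical
  exact congrArg (fun v => FreeMonoid.ofList v.toList)
    (CoprodI.Word.equiv.apply_symm_apply w.toWord)

theorem eq_one_or_hasReducedWord (g : CoprodI G) : g = 1 ∨ ∃ i j, HasReducedWord i j g := by
  classical
  by_cases hg : CoprodI.Word.equiv g = CoprodI.Word.empty
  · exact Or.inl (CoprodI.Word.equiv.injective (hg.trans (by simp [CoprodI.Word.equiv])))
  · obtain ⟨i, j, w, hw⟩ := CoprodI.NeWord.of_word _ hg
    exact Or.inr ⟨i, j, w, ((Equiv.eq_symm_apply _).2 hw.symm).symm⟩

namespace HasReducedWord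

variable {i j k l : ι} {g h c : CoprodI G}

theorem of {x : G i} (hx : x ≠ 1) : HasReducedWord i i (CoprodI.of x) :=
  ⟨.singleton x hx, CoprodI.NeWord.prod_singleton x hx⟩

theorem mul (hg : HasReducedWord i j g) (hjk : j ≠ k) (hh : HasReducedWord k l h) :
    HasReducedWord i l (g * h) := by
  obtain ⟨v, rfl⟩ := hg
  obtain ⟨w, rfl⟩ := hh
  exact ⟨v.append hjk w, CoprodI.NeWord.append_prod⟩

theorem inv (hg : HasReducedWord i j g) : HasReducedWord j i g⁻¹ := by
  obtain ⟨w, rfl⟩ := hg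
  exact ⟨w.inv, w.inv_prod⟩

theorem pow (hc : HasReducedWord i j c) (hij : i ≠ j) {n : ℕ} (hn : n ≠ 0) :
    HasReducedWord i j (c ^ n) := by
  induction n, Nat.one_le_iff_ne_zero.2 hn using Nat.le_induction with
  | base => simpa using hc
  | succ n hn ih => exact pow_succ c n ▸ (ih (by lia)).mul hij.symm hc

theorem mul_pow (hg : HasReducedWord k j g) (hc : HasReducedWord i j c) (hij : i ≠ j) (n : ℕ) :
    HasReducedWord k j (g * c ^ n) := by
  rcases eq_or_ne n 0 with rfl | hn
  · simpa using hg
  · exact hg.mul hij.symm (hc.pow hij hn)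

theorem pow_mul (hg : HasReducedWord i k g) (hc : HasReducedWord i j c) (hij : i ≠ j) (n : ℕ) :
    HasReducedWord i k (c ^ n * g) := by
  rcases eq_or_ne n 0 with rfl | hn
  · simpa using hg
  · exact (hc.pow hij hn).mul hij.symm hg

theorem syllables_mul (hg : HasReducedWord i j g) (hjk : j ≠ k) (hh : HasReducedWord k l h) :
    syllables (g * h) = syllables g * syllables h := by
  obtain ⟨v, rfl⟩ := hg
  obtain ⟨w, rfl⟩ := hh
  rw [← CoprodI.NeWord.append_prod (hne := hjk)]
  simp only [syllables_neWord_prod, CoprodI.NeWord.toList, FreeMonoid.ofList_append]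

theorem length_pos (hg : HasReducedWord i j g) : 0 < (syllables g).length := by
  obtain ⟨w, rfl⟩ := hg
  rw [syllables_neWord_prod]
  exact List.length_pos_of_ne_nil w.toList_ne_nil

theorem ne_one (hg : HasReducedWord i j g) : g ≠ 1 := by
  rintro rfl
  simpa [syllables_one] using hg.length_pos

theorem unique (h₁ : HasReducedWord i j g) (h₂ : HasReducedWord k l g) : i = k ∧ j = l := by
  obtain ⟨v, rfl⟩ := h₁
  obtain ⟨w, hw⟩ := h₂
  have hlist : w.toList = v.toList := by
    simpa only [syllables_neWord_prod, EmbeddingLike.apply_eq_iff_eq] using congrArg syllables hw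
  have hhead := congrArg List.head? hlist
  have hlast := congrArg List.getLast? hlist
  rw [CoprodI.NeWord.toList_head?, CoprodI.NeWord.toList_head?] at hhead
  rw [CoprodI.NeWord.toList_getLast?, CoprodI.NeWord.toList_getLast?] at hlast
  exact ⟨(congrArg Sigma.fst (Option.some.inj hhead)).symm,
    (congrArg Sigma.fst (Option.some.inj hlast)).symm⟩

theorem eq_of_or_eq_of_mul (hg : HasReducedWord i j g) :
    (i = j ∧ ∃ x : G i, g = CoprodI.of x) ∨
      ∃ (x : G i) (k : ι) (h : CoprodI G), i ≠ k ∧ HasReducedWord k j h ∧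
        (syllables h).length < (syllables g).length ∧ g = CoprodI.of x * h := by
  obtain ⟨w, rfl⟩ := hg
  induction w with
  | singleton x hx => exact Or.inl ⟨rfl, x, CoprodI.NeWord.prod_singleton x hx⟩
  | @append i j k l v hjk w ihv _ =>
    have hv : HasReducedWord i j v.prod := ⟨v, rfl⟩
    have hw : HasReducedWord k l w.prod := ⟨w, rfl⟩
    right
    rw [CoprodI.NeWord.append_prod, hv.syllables_mul hjk hw, FreeMonoid.length_mul]
    rcases ihv with ⟨rfl, x, hx⟩ | ⟨x, k', v', hik, hv', hlen, hx⟩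
    · exact ⟨x, k, w.prod, hjk, hw, Nat.lt_add_of_pos_left hv.length_pos, by rw [hx]⟩
    · refine ⟨x, k', v' * w.prod, hik, hv'.mul hjk hw, ?_, by rw [hx, mul_assoc]⟩
      rwa [hv'.syllables_mul hjk hw, FreeMonoid.length_mul, add_lt_add_iff_right]

theorem eq_of_or_eq_mul_of (hg : HasReducedWord i j g) :
    (i = j ∧ ∃ x : G j, g = CoprodI.of x) ∨
      ∃ (x : G j) (k : ι) (h : CoprodI G), k ≠ j ∧ HasReducedWord i k h ∧
        (syllables h).length < (syllables g).length ∧ g = h * CoprodI.of x := by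
  obtain ⟨w, rfl⟩ := hg
  induction w with
  | singleton x hx => exact Or.inl ⟨rfl, x, CoprodI.NeWord.prod_singleton x hx⟩
  | @append i j k l v hjk w _ ihw =>
    have hv : HasReducedWord i j v.prod := ⟨v, rfl⟩
    have hw : HasReducedWord k l w.prod := ⟨w, rfl⟩
    right
    rw [CoprodI.NeWord.append_prod, hv.syllables_mul hjk hw, FreeMonoid.length_mul]
    rcases ihw with ⟨rfl, x, hx⟩ | ⟨x, k', w', hkl, hw', hlen, hx⟩
    · exact ⟨x, j, v.prod, hjk, hv, Nat.lt_add_of_pos_right hw.length_pos, by rw [hx]⟩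
    · refine ⟨x, k', v.prod * w', hkl, hv.mul hjk hw', ?_, by rw [hx, mul_assoc]⟩
      rwa [hv.syllables_mul hjk hw', FreeMonoid.length_mul, add_lt_add_iff_left]

theorem of_mul_eq_one_or (x : G l) (hg : HasReducedWord i j g) :
    CoprodI.of x * g = 1 ∨ ∃ k, HasReducedWord k j (CoprodI.of x * g) := by
  rcases eq_or_ne x 1 with rfl | hx
  · exact Or.inr ⟨i, by simpa using hg⟩
  rcases ne_or_eq l i with hli | rfl
  · exact Or.inr ⟨l, (HasReducedWord.of hx).mul hli hg⟩
  rcases hg.eq_of_or_eq_of_mul with ⟨rfl, y, rfl⟩ | ⟨y, k, h, hlk, hh, -, rfl⟩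
  · rw [← map_mul]
    rcases eq_or_ne (x * y) 1 with hxy | hxy
    · exact Or.inl (by rw [hxy, map_one])
    · exact Or.inr ⟨l, HasReducedWord.of hxy⟩
  · rw [← mul_assoc, ← map_mul]
    rcases eq_or_ne (x * y) 1 with hxy | hxy
    · exact Or.inr ⟨k, by simpa [hxy] using hh⟩
    · exact Or.inr ⟨l, (HasReducedWord.of hxy).mul hlk hh⟩

theorem exists_mul_pow (hc : HasReducedWord i j c) (g : CoprodI G) :
    ∃ n k, HasReducedWord k j (g * c ^ n) := by
  induction g using CoprodI.induction_left with
  | one => exact ⟨1, i, by simpa using hc⟩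
  | mul x g ih =>
    obtain ⟨n, k, hg⟩ := ih
    rcases hg.of_mul_eq_one_or x with hx | ⟨l, hx⟩
    · refine ⟨n + 1, i, ?_⟩
      rwa [pow_succ, ← mul_assoc, mul_assoc _ g, hx, one_mul]
    · exact ⟨n, l, by rwa [mul_assoc]⟩

theorem exists_pow_mul (hc : HasReducedWord i j c) (g : CoprodI G) :
    ∃ n k, HasReducedWord i k (c ^ n * g) := by
  obtain ⟨n, k, h⟩ := hc.inv.exists_mul_pow g⁻¹
  exact ⟨n, k, by simpa using h.inv⟩

theorem exists_mul_pow_of_commute (hc : HasReducedWord i j c) (hij : i ≠ j) (hg : Commute g c) :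
    ∃ n, HasReducedWord i j (g * c ^ n) := by
  obtain ⟨n, k, hn⟩ := hc.exists_mul_pow g
  obtain ⟨n', k', hn'⟩ := hc.exists_pow_mul g
  have hright : HasReducedWord k j (g * c ^ (n + n')) := by
    simpa only [pow_add, mul_assoc] using hn.mul_pow hc hij n'
  have hleft : HasReducedWord i k' (g * c ^ (n + n')) := by
    rw [(hg.pow_right _).eq, pow_add, mul_assoc]
    exact hn'.pow_mul hc hij n
  obtain ⟨rfl, -⟩ := hleft.unique hright
  exact ⟨n + n', hright⟩

theorem commute_of_commute (hc : HasReducedWord i j c) (hij : i ≠ j) (hg : Commute g c)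
    (hh : Commute h c) : Commute g h := by
  obtain ⟨n, hgn⟩ := hc.exists_mul_pow_of_commute hij hg
  obtain ⟨k, hhk⟩ := hc.exists_mul_pow_of_commute hij hh
  have syllables_commute {a b : CoprodI G} (ha : HasReducedWord i j a)
      (hb : HasReducedWord i j b) : Commute (syllables a) (syllables b) ↔ Commute a b := by
    rw [commute_iff_eq, commute_iff_eq, ← ha.syllables_mul hij.symm hb,
      ← hb.syllables_mul hij.symm ha, syllables_injective.eq_iff]
  -- Words with the same end letters as `c` multiply without cancellation, as in a free monoid.
  have hgh : Commute (g * c ^ n) (h * c ^ k) := by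
    rw [← syllables_commute hgn hhk]
    refine IsCommutationTransitive.freeMonoid _ (c := syllables c) ?_
      ((syllables_commute hgn hc).2 (hg.mul_left (Commute.pow_self c n)))
      ((syllables_commute hhk hc).2 (hh.mul_left (Commute.pow_self c k)))
    exact mt FreeMonoid.length_eq_zero.2 hc.length_pos.ne'
  have hgh' : Commute g (h * c ^ k) := by
    simpa using hgh.mul_left ((hh.mul_left (Commute.pow_self c k)).symm.pow_left n).inv_left
  simpa using hgh'.mul_right (hg.pow_right k).inv_right

theorem isConj_of_or_isConj_cyclicallyReduced (hg : HasReducedWord i j g) :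
    (∃ (k : ι) (x : G k), IsConj (CoprodI.of x) g) ∨
      ∃ (k l : ι) (c : CoprodI G), k ≠ l ∧ HasReducedWord k l c ∧ IsConj c g := by
  induction hn : (syllables g).length using Nat.strong_induction_on generalizing i j g with
  | _ n ih =>
  rcases ne_or_eq i j with hij | rfl
  · exact Or.inr ⟨i, j, g, hij, hg, IsConj.refl g⟩
  rcases hg.eq_of_or_eq_of_mul with ⟨-, x, rfl⟩ | ⟨x, k, h, hik, hh, hlen, rfl⟩
  · exact Or.inl ⟨i, x, IsConj.refl _⟩
  rcases hh.eq_of_or_eq_mul_of with ⟨rfl, -⟩ | ⟨y, l, h, hli, hh', hlen', rfl⟩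
  · exact absurd rfl hik
  have hconj : IsConj (h * CoprodI.of (y * x)) (CoprodI.of x * (h * CoprodI.of y)) :=
    isConj_iff.2 ⟨CoprodI.of x, by simp [mul_assoc]⟩
  rcases eq_or_ne (y * x) 1 with hyx | hyx
  · rw [hyx, map_one, mul_one] at hconj
    rcases ih _ (by lia) hh' rfl with ⟨k, z, hz⟩ | ⟨k, l, c, hkl, hc, hcg⟩
    · exact Or.inl ⟨k, z, hz.trans hconj⟩
    · exact Or.inr ⟨k, l, c, hkl, hc, hcg.trans hconj⟩
  · exact Or.inr ⟨k, i, _, hik.symm, hh'.mul hli (HasReducedWord.of hyx), hconj⟩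

end HasReducedWord

theorem exists_isConj_of_of_isOfFinOrder [Nonempty ι] {g : CoprodI G} (hg : IsOfFinOrder g) :
    ∃ (i : ι) (x : G i), IsConj (CoprodI.of x) g := by
  rcases eq_one_or_hasReducedWord g with rfl | ⟨i, j, h⟩
  · exact ⟨Classical.arbitrary ι, 1, by rw [map_one]⟩
  refine h.isConj_of_or_isConj_cyclicallyReduced.resolve_right ?_
  rintro ⟨k, l, c, hkl, hc, hcg⟩
  obtain ⟨n, hn, hgn⟩ := isOfFinOrder_iff_pow_eq_one.1 hg
  have hcn := hcg.pow n
  rw [hgn, isConj_one_left] at hcn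
  exact (hc.pow hkl hn.ne').ne_one hcn

theorem exists_eq_of_of_mul_of_eq {i : ι} {x y : G i} (hx : x ≠ 1) {g : CoprodI G}
    (h : g * CoprodI.of x = CoprodI.of y * g) : ∃ z : G i, g = CoprodI.of z := by
  induction hn : (syllables g).length using Nat.strong_induction_on generalizing x y g with
  | _ n ih =>
  have hy : y ≠ 1 := by
    rintro rfl
    rw [map_one, one_mul, mul_eq_left] at h
    exact hx (CoprodI.of_injective i (h.trans (map_one _).symm))
  rcases eq_one_or_hasReducedWord g with rfl | ⟨k, l, hg⟩
  · exact ⟨1, (map_one _).symm⟩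
  rcases eq_or_ne l i with rfl | hli
  · rcases hg.eq_of_or_eq_mul_of with ⟨-, z, hz⟩ | ⟨z, -, g', -, -, hlen, rfl⟩
    · exact ⟨z, hz⟩
    obtain ⟨t, rfl⟩ := ih _ (hn ▸ hlen) (x := z * x * z⁻¹) (y := y) (by simpa using hx)
      (by simp [map_mul, ← mul_assoc, h]) rfl
    exact ⟨t * z, (map_mul _ _ _).symm⟩
  rcases eq_or_ne i k with rfl | hik
  · rcases hg.eq_of_or_eq_of_mul with ⟨-, z, hz⟩ | ⟨z, -, g', -, -, hlen, rfl⟩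
    · exact ⟨z, hz⟩
    obtain ⟨t, rfl⟩ := ih _ (hn ▸ hlen) (x := x) (y := z⁻¹ * y * z) hx
      (by simp [map_mul, mul_assoc, ← h]) rfl
    exact ⟨z * t, (map_mul _ _ _).symm⟩
  · have hright := hg.mul hli (HasReducedWord.of hx)
    rw [h] at hright
    exact absurd (((HasReducedWord.of hy).mul hik hg).unique hright).1 hik

theorem commute_of_isConj {H : Type*} [Group H] {a b c d : H} (hdc : IsConj d c)
    (hd : ∀ ⦃g h : H⦄, Commute g d → Commute h d → Commute g h) (ha : Commute a c)
    (hb : Commute b c) : Commute a b := by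
  obtain ⟨p, rfl⟩ := isConj_iff.1 hdc
  have commute_conj {g : H} (hg : Commute g (p * d * p⁻¹)) : Commute (p⁻¹ * g * p⁻¹⁻¹) d := by
    simpa [mul_assoc] using (Commute.conj_iff p⁻¹).2 hg
  exact (Commute.conj_iff p⁻¹).1 (hd (commute_conj ha) (commute_conj hb))

theorem IsCommutationTransitive.coprodI (hG : ∀ i, IsCommutationTransitive (G i)) :
    IsCommutationTransitive (CoprodI G) := by
  intro a b c hc ha hb
  obtain ⟨i, j, h⟩ := (eq_one_or_hasReducedWord c).resolve_left hc
  rcases h.isConj_of_or_isConj_cyclicallyReduced with ⟨k, x, hx⟩ | ⟨k, l, d, hkl, hd, hdc⟩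
  · refine commute_of_isConj hx (fun g h hg hh => ?_) ha hb
    have hx_ne : x ≠ 1 := by
      rintro rfl
      exact hc (by simpa using hx.symm)
    obtain ⟨y, rfl⟩ := exists_eq_of_of_mul_of_eq hx_ne hg.eq
    obtain ⟨z, rfl⟩ := exists_eq_of_of_mul_of_eq hx_ne hh.eq
    rw [commute_map_iff (CoprodI.of_injective k)] at hg hh ⊢
    exact hG k hx_ne hg hh
  · exact commute_of_isConj hdc (fun _ _ => hd.commute_of_commute hkl) ha hb

end FreeProduct

section CyclicHom

variable {H : Type*} [Group H]

/-- The homomorphism from the cyclic group of order `n` (infinite for `n = 0`) sending its generator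
to `x`. -/
def cyclicHom (n : ℕ) (x : H) (hx : x ^ n = 1) : Multiplicative (ZMod n) →* H :=
  AddMonoidHom.toMultiplicativeLeft
    (ZMod.lift n ⟨zmultiplesHom (Additive H) (Additive.ofMul x), by
      simpa [← ofMul_pow] using hx⟩)

theorem cyclicHom_ofAdd_one (n : ℕ) (x : H) (hx : x ^ n = 1) :
    cyclicHom n x hx (.ofAdd 1) = x := by
  change Additive.toMul (ZMod.lift n _ 1) = x
  rw [← Int.cast_one, ZMod.lift_coe]
  simp

theorem exists_eq_ofAdd_one_zpow {n : ℕ} (k : Multiplicative (ZMod n)) :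
    ∃ j : ℤ, k = .ofAdd 1 ^ j := by
  obtain ⟨j, hj⟩ := ZMod.intCast_surjective k.toAdd
  exact ⟨j, by rw [← ofAdd_zsmul, zsmul_one, hj, ofAdd_toAdd]⟩

theorem cyclicHom_ext {n : ℕ} {f g : Multiplicative (ZMod n) →* H}
    (h : f (.ofAdd 1) = g (.ofAdd 1)) : f = g := by
  refine MonoidHom.ext fun k => ?_
  obtain ⟨j, rfl⟩ := exists_eq_ofAdd_one_zpow k
  rw [map_zpow, map_zpow, h]

end CyclicHom

section CyclicFreeProduct

variable (m ℓ : ℕ)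

/-- The free product of the cyclic groups of orders `m` (index `true`) and `ℓ` (index `false`). -/
abbrev CyclicFreeProduct : Type :=
  CoprodI fun b : Bool => Multiplicative (ZMod (cond b m ℓ))

/-- The generator of a factor of `CyclicFreeProduct m ℓ`. -/
def cyclicGen (b : Bool) : CyclicFreeProduct m ℓ :=
  CoprodI.of (i := b) (.ofAdd 1)

theorem cyclicGen_pow (b : Bool) : cyclicGen m ℓ b ^ cond b m ℓ = 1 := by
  rw [cyclicGen, ← map_pow, ← ofAdd_nsmul, nsmul_one, ZMod.natCast_self, ofAdd_zero, map_one]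

variable {m ℓ}

theorem of_eq_cyclicGen_zpow (b : Bool) (x : Multiplicative (ZMod (cond b m ℓ))) :
    ∃ k : ℤ, (CoprodI.of x : CyclicFreeProduct m ℓ) = cyclicGen m ℓ b ^ k := by
  obtain ⟨k, rfl⟩ := exists_eq_ofAdd_one_zpow x
  exact ⟨k, map_zpow _ _ k⟩

theorem exists_isConj_cyclicGen_zpow {g : CyclicFreeProduct m ℓ} (hg : IsOfFinOrder g) :
    ∃ (b : Bool) (k : ℤ), IsConj (cyclicGen m ℓ b ^ k) g := by
  obtain ⟨b, x, hx⟩ := exists_isConj_of_of_isOfFinOrder hg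
  obtain ⟨k, hk⟩ := of_eq_cyclicGen_zpow b x
  exact ⟨b, k, hk ▸ hx⟩

variable (m ℓ) in
theorem isCommutationTransitive_cyclicFreeProduct :
    IsCommutationTransitive (CyclicFreeProduct m ℓ) :=
  .coprodI fun _ => .of_commMonoid _

end CyclicFreeProduct

section CircularGroup

variable {m ℓ : ℕ} {H : Type*} [Group H]

theorem circWord_zero (i : ZMod m) : circWord m i 0 = 1 :=
  rfl

theorem circWord_succ (i : ZMod m) (p : ℕ) :
    circWord m i (p + 1) = circWord m i p * FreeGroup.of (i + p) := by
  simp [circWord, List.range_succ]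

theorem mk_circWord_add_one (i : ZMod m) :
    PresentedGroup.mk (circRels m ℓ) (circWord m (i + 1) ℓ) =
      PresentedGroup.mk (circRels m ℓ) (circWord m i ℓ) := by
  rw [eq_comm, ← mul_inv_eq_one, ← map_inv, ← map_mul]
  exact PresentedGroup.one_of_mem ⟨i, rfl⟩

theorem map_circWord_of_eq_conj (F : FreeGroup (ZMod m) →* H) (φ : Multiplicative (ZMod m) →* H)
    (c : H) (hF : ∀ i, F (.of i) = φ (.ofAdd i) * c * (φ (.ofAdd i))⁻¹) (i : ZMod m) (p : ℕ) :
    F (circWord m i p) =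
      φ (.ofAdd i) * ((c * φ (.ofAdd 1)) ^ p * (φ (.ofAdd 1) ^ p)⁻¹) * (φ (.ofAdd i))⁻¹ := by
  induction p with
  | zero => simp [circWord_zero]
  | succ p ih =>
    have hp : φ (.ofAdd (p : ZMod m)) = φ (.ofAdd 1) ^ p := by
      rw [← map_pow, ← ofAdd_nsmul, nsmul_one]
    rw [circWord_succ, map_mul, ih, hF, ofAdd_add, map_mul, hp, pow_succ (c * _),
      pow_succ' (φ (.ofAdd 1))]
    group

theorem map_circWord_add_one_eq_iff (F : FreeGroup (ZMod m) →* H) (φ : Multiplicative (ZMod m) →* H)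
    (c : H) (hF : ∀ i, F (.of i) = φ (.ofAdd i) * c * (φ (.ofAdd i))⁻¹) (i : ZMod m) (p : ℕ) :
    F (circWord m (i + 1) p) = F (circWord m i p) ↔
      Commute ((c * φ (.ofAdd 1)) ^ p) (φ (.ofAdd 1)) := by
  have hcomm : Commute (φ (.ofAdd (1 : ZMod m)) ^ p) (φ (.ofAdd 1)) := Commute.pow_self _ p
  rw [map_circWord_of_eq_conj F φ c hF, map_circWord_of_eq_conj F φ c hF, ofAdd_add, map_mul]
  generalize φ (.ofAdd i) = a at *
  generalize φ (.ofAdd (1 : ZMod m)) = x at *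
  have hconj : a * x * ((c * x) ^ p * (x ^ p)⁻¹) * (a * x)⁻¹ =
      MulAut.conj a (x * ((c * x) ^ p * (x ^ p)⁻¹) * x⁻¹) := by
    simp [mul_assoc]
  rw [hconj, ← MulAut.conj_apply a, EmbeddingLike.apply_eq_iff_eq, mul_inv_eq_iff_eq_mul, eq_comm]
  exact ⟨fun h => by simpa using Commute.mul_left h hcomm, fun h => h.mul_left hcomm.inv_left⟩

/-- The homomorphism from a circular group sending `a_i` to `f i`. -/
def circLift (f : ZMod m → H)
    (hf : ∀ i, FreeGroup.lift f (circWord m (i + 1) ℓ) = FreeGroup.lift f (circWord m i ℓ)) :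
    CircularGroup m ℓ →* H :=
  PresentedGroup.toGroup (f := f) (by
    rintro _ ⟨i, rfl⟩
    rw [map_mul, map_inv, hf, mul_inv_cancel])

theorem circLift_circGen (f : ZMod m → H)
    (hf : ∀ i, FreeGroup.lift f (circWord m (i + 1) ℓ) = FreeGroup.lift f (circWord m i ℓ))
    (i : ZMod m) : circLift f hf (circGen m ℓ i) = f i :=
  PresentedGroup.toGroup.of _

theorem circularGroup_hom_ext {f g : CircularGroup m ℓ →* H}
    (h : ∀ i, f (circGen m ℓ i) = g (circGen m ℓ i)) : f = g :=
  PresentedGroup.ext h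

theorem lift_circGen_add_circWord (k i : ZMod m) (p : ℕ) :
    FreeGroup.lift (fun j => circGen m ℓ (k + j)) (circWord m i p) =
      PresentedGroup.mk (circRels m ℓ) (circWord m (k + i) p) := by
  induction p with
  | zero => simp [circWord_zero]
  | succ p ih =>
    rw [circWord_succ, circWord_succ, map_mul, map_mul, ih, FreeGroup.lift_apply_of, add_assoc]
    rfl

/-- The endomorphism `a_i ↦ a_{k+i}` of a circular group. -/
def circShift (k : ZMod m) : CircularGroup m ℓ →* CircularGroup m ℓ :=
  circLift (fun i => circGen m ℓ (k + i)) fun i => by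
    rw [lift_circGen_add_circWord, lift_circGen_add_circWord, ← add_assoc, mk_circWord_add_one]

theorem circShift_circGen (k i : ZMod m) : circShift k (circGen m ℓ i) = circGen m ℓ (k + i) :=
  circLift_circGen _ _ i

theorem circShift_zero : circShift 0 = MonoidHom.id (CircularGroup m ℓ) :=
  circularGroup_hom_ext fun i => by simp [circShift_circGen]

theorem circShift_comp_circShift (k k' : ZMod m) :
    (circShift k).comp (circShift k') = (circShift (k + k') : CircularGroup m ℓ →* _) :=
  circularGroup_hom_ext fun i => by simp [circShift_circGen, add_assoc]

variable (m ℓ) in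
/-- The action of the cyclic group of order `m` on a circular group by shifting the generators. -/
def circShiftAut : Multiplicative (ZMod m) →* MulAut (CircularGroup m ℓ) where
  toFun k := (circShift k.toAdd).toMulEquiv (circShift (-k.toAdd))
    (by rw [circShift_comp_circShift, neg_add_cancel, circShift_zero])
    (by rw [circShift_comp_circShift, add_neg_cancel, circShift_zero])
  map_one' := by
    ext g
    exact DFunLike.congr_fun circShift_zero g
  map_mul' k k' := by
    ext g
    exact (DFunLike.congr_fun (circShift_comp_circShift k.toAdd k'.toAdd) g).symm

theorem circShiftAut_circGen (k : Multiplicative (ZMod m)) (i : ZMod m) :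
    circShiftAut m ℓ k (circGen m ℓ i) = circGen m ℓ (k.toAdd + i) :=
  circShift_circGen _ i

variable (m ℓ) in
/-- The semidirect product of a circular group with the cyclic group of shifts. -/
abbrev CircularShiftGroup : Type :=
  CircularGroup m ℓ ⋊[circShiftAut m ℓ] Multiplicative (ZMod m)

end CircularGroup

namespace CircularShiftGroup

open SemidirectProduct

section UniversalProperty

variable {m ℓ : ℕ} {H : Type*} [Group H]

variable (m ℓ) in
/-- The shift `τ`, whose conjugation action on the circular group is `a_i ↦ a_{i+1}`. -/
def shift : CircularShiftGroup m ℓ :=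
  inr (.ofAdd 1)

variable (m ℓ) in
/-- The element `u = a_0 τ`, whose `ℓ`-th power `s(0,ℓ) τ^ℓ` is central. -/
def garsideRoot : CircularShiftGroup m ℓ :=
  inl (circGen m ℓ 0) * shift m ℓ

theorem shift_pow : shift m ℓ ^ m = 1 := by
  rw [shift, ← map_pow, ← ofAdd_nsmul, nsmul_one, ZMod.natCast_self, ofAdd_zero, map_one]

theorem inl_circGen (i : ZMod m) :
    (inl (circGen m ℓ i) : CircularShiftGroup m ℓ) =
      inr (.ofAdd i) * inl (circGen m ℓ 0) * (inr (.ofAdd i))⁻¹ := by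
  rw [← map_inv, ← inl_aut, circShiftAut_circGen, toAdd_ofAdd, add_zero]

theorem hom_ext {f g : CircularShiftGroup m ℓ →* H} (hshift : f (shift m ℓ) = g (shift m ℓ))
    (hroot : f (garsideRoot m ℓ) = g (garsideRoot m ℓ)) : f = g := by
  have hinr : f.comp inr = g.comp inr := cyclicHom_ext hshift
  refine SemidirectProduct.hom_ext (circularGroup_hom_ext fun i => ?_) hinr
  have hgen : f (inl (circGen m ℓ 0)) = g (inl (circGen m ℓ 0)) := by
    rwa [garsideRoot, map_mul, map_mul, hshift, mul_left_inj] at hroot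
  have hi : f (inr (.ofAdd i)) = g (inr (.ofAdd i)) := DFunLike.congr_fun hinr (.ofAdd i)
  simp only [MonoidHom.comp_apply, inl_circGen i, map_mul, map_inv, hgen, hi]

/-- The universal property of the presentation `⟨τ, u | τ^m = 1, u^ℓ τ = τ u^ℓ⟩`. -/
def lift (x y : H) (hx : x ^ m = 1) (hxy : Commute (y ^ ℓ) x) : CircularShiftGroup m ℓ →* H :=
  SemidirectProduct.lift
    (circLift (fun i => cyclicHom m x hx (.ofAdd i) * (y * x⁻¹) * (cyclicHom m x hx (.ofAdd i))⁻¹)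
      fun i => by
        rw [map_circWord_add_one_eq_iff _ (cyclicHom m x hx) (y * x⁻¹)
            (fun _ => FreeGroup.lift_apply_of), cyclicHom_ofAdd_one, inv_mul_cancel_right]
        exact hxy)
    (cyclicHom m x hx) fun k => circularGroup_hom_ext fun i => by
      simp [circShiftAut_circGen, circLift_circGen, ofAdd_add, mul_assoc]

theorem lift_shift (x y : H) (hx : x ^ m = 1) (hxy : Commute (y ^ ℓ) x) :
    lift x y hx hxy (shift m ℓ) = x := by
  rw [lift, shift, lift_inr, cyclicHom_ofAdd_one]

theorem lift_garsideRoot (x y : H) (hx : x ^ m = 1) (hxy : Commute (y ^ ℓ) x) :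
    lift x y hx hxy (garsideRoot m ℓ) = y := by
  rw [garsideRoot, map_mul, lift_shift, lift, lift_inl, circLift_circGen, ofAdd_zero, map_one]
  group

theorem commute_garsideRoot_pow_shift : Commute (garsideRoot m ℓ ^ ℓ) (shift m ℓ) := by
  let F : FreeGroup (ZMod m) →* CircularShiftGroup m ℓ := inl.comp (PresentedGroup.mk _)
  have hF : F (circWord m (0 + 1) ℓ) = F (circWord m 0 ℓ) := congrArg inl (mk_circWord_add_one 0)
  exact (map_circWord_add_one_eq_iff F inr (inl (circGen m ℓ 0)) inl_circGen 0 ℓ).1 hF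

theorem garsideRoot_pow_mem_center :
    garsideRoot m ℓ ^ ℓ ∈ Subgroup.center (CircularShiftGroup m ℓ) := by
  have h : (MulAut.conj (garsideRoot m ℓ ^ ℓ)).toMonoidHom = MonoidHom.id _ := by
    refine hom_ext ?_ ?_
    · exact mul_inv_eq_iff_eq_mul.2 commute_garsideRoot_pow_shift.eq
    · exact mul_inv_eq_iff_eq_mul.2 (Commute.pow_self _ _).eq
  refine Subgroup.mem_center_iff.2 fun g => ?_
  exact (mul_inv_eq_iff_eq_mul.1 (DFunLike.congr_fun h g)).symm

end UniversalProperty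

section CentralExtension

variable (m ℓ : ℕ)

/-- The projection to the free product of cyclic groups, whose kernel is generated by the central
element `u^ℓ`. -/
def proj : CircularShiftGroup m ℓ →* CyclicFreeProduct m ℓ :=
  lift (cyclicGen m ℓ true) (cyclicGen m ℓ false) (cyclicGen_pow m ℓ true)
    (by rw [show cyclicGen m ℓ false ^ ℓ = 1 from cyclicGen_pow m ℓ false]
        exact Commute.one_left _)

/-- The degree, for which every generator `a_i` has degree one and the shift degree zero. -/
def deg : CircularShiftGroup m ℓ →* Multiplicative ℤ :=
  lift 1 (.ofAdd 1) (one_pow m) (Commute.all _ _)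

variable {m ℓ}

theorem proj_shift : proj m ℓ (shift m ℓ) = cyclicGen m ℓ true :=
  lift_shift _ _ _ _

theorem proj_garsideRoot : proj m ℓ (garsideRoot m ℓ) = cyclicGen m ℓ false :=
  lift_garsideRoot _ _ _ _

theorem deg_shift : deg m ℓ (shift m ℓ) = 1 :=
  lift_shift _ _ _ _

theorem deg_garsideRoot : deg m ℓ (garsideRoot m ℓ) = .ofAdd 1 :=
  lift_garsideRoot _ _ _ _

theorem rightHom_shift : rightHom (shift m ℓ) = .ofAdd 1 :=
  rightHom_inr _

theorem rightHom_garsideRoot : rightHom (garsideRoot m ℓ) = .ofAdd 1 := by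
  rw [garsideRoot, map_mul, rightHom_inl, one_mul, rightHom_shift]

theorem proj_surjective : Function.Surjective (proj m ℓ) := by
  rw [← MonoidHom.range_eq_top, Subgroup.eq_top_iff']
  have cyclicGen_mem : ∀ b, cyclicGen m ℓ b ∈ (proj m ℓ).range
    | true => ⟨_, proj_shift⟩
    | false => ⟨_, proj_garsideRoot⟩
  intro g
  induction g using CoprodI.induction_left with
  | one => exact one_mem _
  | mul x g ih =>
    obtain ⟨k, hk⟩ := of_eq_cyclicGen_zpow _ x
    exact hk ▸ mul_mem (zpow_mem (cyclicGen_mem _) k) ih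

instance normal_zpowers_garsideRoot_pow : (Subgroup.zpowers (garsideRoot m ℓ ^ ℓ)).Normal where
  conj_mem z hz g := by
    have hcenter := Subgroup.zpowers_le.2 garsideRoot_pow_mem_center hz
    rwa [Subgroup.mem_center_iff.1 hcenter g, mul_inv_cancel_right]

theorem ker_proj_le_zpowers : (proj m ℓ).ker ≤ Subgroup.zpowers (garsideRoot m ℓ ^ ℓ) := by
  set Z := Subgroup.zpowers (garsideRoot m ℓ ^ ℓ)
  let ψ : CyclicFreeProduct m ℓ →* CircularShiftGroup m ℓ ⧸ Z := CoprodI.lift fun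
    | true => cyclicHom m (shift m ℓ : _ ⧸ Z) (by
        rw [← QuotientGroup.mk_pow, shift_pow, QuotientGroup.mk_one])
    | false => cyclicHom ℓ (garsideRoot m ℓ : _ ⧸ Z) (by
        rw [← QuotientGroup.mk_pow]
        exact (QuotientGroup.eq_one_iff _).2 (Subgroup.mem_zpowers _))
  have hψ : ψ.comp (proj m ℓ) = QuotientGroup.mk' Z := by
    refine hom_ext ?_ ?_
    · rw [MonoidHom.comp_apply, proj_shift, cyclicGen, CoprodI.lift_of]
      exact cyclicHom_ofAdd_one _ _ _
    · rw [MonoidHom.comp_apply, proj_garsideRoot, cyclicGen, CoprodI.lift_of]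
      exact cyclicHom_ofAdd_one _ _ _
  intro g hg
  rw [← QuotientGroup.eq_one_iff, ← QuotientGroup.mk'_apply, ← hψ, MonoidHom.comp_apply, hg,
    map_one]

theorem exists_eq_garsideRoot_zpow_of_proj_eq_one {g : CircularShiftGroup m ℓ}
    (hg : proj m ℓ g = 1) : ∃ k : ℤ, g = garsideRoot m ℓ ^ (ℓ * k) := by
  obtain ⟨k, rfl⟩ := ker_proj_le_zpowers hg
  exact ⟨k, by rw [zpow_mul, zpow_natCast]⟩

theorem deg_garsideRoot_zpow (k : ℤ) : deg m ℓ (garsideRoot m ℓ ^ k) = .ofAdd k := by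
  rw [map_zpow, deg_garsideRoot, ← ofAdd_zsmul, zsmul_one, Int.cast_id]

theorem proj_prod_deg_injective : Function.Injective ((proj m ℓ).prod (deg m ℓ)) := by
  rw [injective_iff_map_eq_one]
  intro g hg
  obtain ⟨hproj, hdeg⟩ := Prod.mk.inj hg
  obtain ⟨k, rfl⟩ := exists_eq_garsideRoot_zpow_of_proj_eq_one hproj
  rw [deg_garsideRoot_zpow] at hdeg
  rw [ofAdd_eq_one.1 hdeg, zpow_zero]

theorem commute_of_commute_proj {g h : CircularShiftGroup m ℓ}
    (hgh : Commute (proj m ℓ g) (proj m ℓ h)) : Commute g h :=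
  (commute_map_iff proj_prod_deg_injective).1 (hgh.prod (Commute.all _ _))

end CentralExtension

section Roots

variable {m ℓ : ℕ} {α β : CircularGroup m ℓ}

theorem exists_eq_inl_mul_zpow {w : CircularShiftGroup m ℓ} (hw : rightHom w = .ofAdd 1)
    (p : CircularShiftGroup m ℓ) : ∃ (γ : CircularGroup m ℓ) (k : ℤ), p = inl γ * w ^ k := by
  obtain ⟨k, hk⟩ := exists_eq_ofAdd_one_zpow (rightHom p)
  have hker : p * (w ^ k)⁻¹ ∈ (rightHom : CircularShiftGroup m ℓ →* _).ker := by
    rw [MonoidHom.mem_ker, map_mul, map_inv, map_zpow, hw, hk, mul_inv_cancel]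
  rw [← range_inl_eq_ker_rightHom] at hker
  obtain ⟨γ, hγ⟩ := hker
  exact ⟨γ, k, by rw [hγ, inv_mul_cancel_right]⟩

theorem exists_isConj_inl_eq_of_isConj_proj {w : CircularShiftGroup m ℓ}
    (hw : rightHom w = .ofAdd 1) {i : ℤ} (h : IsConj (proj m ℓ w ^ i) (proj m ℓ (inl α))) :
    ∃ (α' : CircularGroup m ℓ) (k : ℤ),
      IsConj α' α ∧ inl α' = w ^ i * garsideRoot m ℓ ^ (ℓ * k) := by
  obtain ⟨c, hc⟩ := isConj_iff.1 h
  obtain ⟨p, rfl⟩ := proj_surjective c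
  obtain ⟨γ, j, rfl⟩ := exists_eq_inl_mul_zpow hw p
  have hproj : proj m ℓ ((w ^ i)⁻¹ * inl (γ⁻¹ * α * γ)) = 1 := by
    simp only [map_mul, map_inv, map_zpow] at hc ⊢
    rw [← hc]
    group
  obtain ⟨k, hk⟩ := exists_eq_garsideRoot_zpow_of_proj_eq_one hproj
  exact ⟨γ⁻¹ * α * γ, k, isConj_iff.2 ⟨γ, by group⟩, inv_mul_eq_iff_eq_mul.1 hk⟩

theorem inl_eq_shift_zpow_mul_garsideRoot_zpow {i j : ℤ}
    (h : inl α = shift m ℓ ^ i * garsideRoot m ℓ ^ j) :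
    inl α = shift m ℓ ^ (-(deg m ℓ (inl α)).toAdd) * garsideRoot m ℓ ^ (deg m ℓ (inl α)).toAdd := by
  have hdeg : deg m ℓ (inl α) = .ofAdd j := by
    rw [h, map_mul, map_zpow, deg_shift, one_zpow, one_mul, deg_garsideRoot_zpow]
  have hright : (Multiplicative.ofAdd (1 : ZMod m)) ^ i = .ofAdd 1 ^ (-j) := by
    have := congrArg rightHom h
    rw [rightHom_inl, map_mul, map_zpow, map_zpow, rightHom_shift, rightHom_garsideRoot] at this
    rw [zpow_neg]
    exact eq_inv_of_mul_eq_one_left this.symm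
  have hshift : shift m ℓ ^ i = shift m ℓ ^ (-j) := by
    rw [shift, ← map_zpow inr, hright, map_zpow]
  rw [hdeg, toAdd_ofAdd, ← hshift, h]

theorem exists_isConj_inl_eq_of_isOfFinOrder_proj (hα : IsOfFinOrder (proj m ℓ (inl α))) :
    ∃ α' : CircularGroup m ℓ, IsConj α' α ∧
      inl α' = shift m ℓ ^ (-(deg m ℓ (inl α)).toAdd) *
        garsideRoot m ℓ ^ (deg m ℓ (inl α)).toAdd := by
  have key : ∃ (α' : CircularGroup m ℓ) (i j : ℤ),
      IsConj α' α ∧ inl α' = shift m ℓ ^ i * garsideRoot m ℓ ^ j := by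
    obtain ⟨b, i, hi⟩ := exists_isConj_cyclicGen_zpow hα
    cases b with
    | true =>
      rw [← proj_shift] at hi
      obtain ⟨α', k, hconj, heq⟩ := exists_isConj_inl_eq_of_isConj_proj rightHom_shift hi
      exact ⟨α', i, ℓ * k, hconj, heq⟩
    | false =>
      rw [← proj_garsideRoot] at hi
      obtain ⟨α', k, hconj, heq⟩ := exists_isConj_inl_eq_of_isConj_proj rightHom_garsideRoot hi
      exact ⟨α', 0, i + ℓ * k, hconj, by rw [heq, zpow_zero, one_mul, zpow_add]⟩
  obtain ⟨α', i, j, hconj, heq⟩ := key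
  have hdeg : deg m ℓ (inl α') = deg m ℓ (inl α) :=
    isConj_iff_eq.1 (((deg m ℓ).comp inl).map_isConj hconj)
  exact ⟨α', hconj, hdeg ▸ inl_eq_shift_zpow_mul_garsideRoot_zpow heq⟩

theorem isConj_of_isOfFinOrder_proj (hα : IsOfFinOrder (proj m ℓ (inl α)))
    (hβ : IsOfFinOrder (proj m ℓ (inl β))) (hdeg : deg m ℓ (inl α) = deg m ℓ (inl β)) :
    IsConj α β := by
  obtain ⟨α', hα', heq⟩ := exists_isConj_inl_eq_of_isOfFinOrder_proj hα
  obtain ⟨β', hβ', heq'⟩ := exists_isConj_inl_eq_of_isOfFinOrder_proj hβ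
  have hαβ : α' = β' := inl_injective (by rw [heq, heq', hdeg])
  exact hα'.symm.trans (hαβ ▸ hβ')

theorem deg_eq_of_zpow_eq {g h : CircularShiftGroup m ℓ} {n : ℤ} (hn : n ≠ 0)
    (hgh : g ^ n = h ^ n) : deg m ℓ g = deg m ℓ h :=
  zpow_left_injective hn (by simpa only [map_zpow] using congrArg (deg m ℓ) hgh)

theorem eq_one_of_zpow_eq_one {n : ℤ} (hn : n ≠ 0) (hα : α ^ n = 1) : α = 1 := by
  have hα' : (inl α : CircularShiftGroup m ℓ) ^ n = 1 := by rw [← map_zpow, hα, map_one]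
  refine isConj_one_left.1 (isConj_of_isOfFinOrder_proj ?_ ?_ ?_)
  · exact isOfFinOrder_iff_zpow_eq_one.2 ⟨n, hn, by rw [← map_zpow, hα', map_one]⟩
  · simp only [map_one, IsOfFinOrder.one]
  · exact deg_eq_of_zpow_eq hn (by rw [hα', map_one, one_zpow])

end Roots

end CircularShiftGroup

open SemidirectProduct CircularShiftGroup

/-- Uniqueness of roots up to conjugacy in circular groups: if `α^n = β^n` for some
nonzero integer `n`, then `α` and `β` are conjugate in `G(m,ℓ)`. -/
theorem roots_conjugate_circular (m ℓ : ℕ) (hm : 0 < m) (hℓ : 0 < ℓ)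
    (α β : CircularGroup m ℓ) (n : ℤ) (hn : n ≠ 0) (h : α ^ n = β ^ n) :
    IsConj α β := by
  have h' : (inl α : CircularShiftGroup m ℓ) ^ n = inl β ^ n := by
    rw [← map_zpow, h, map_zpow]
  have hproj : proj m ℓ (inl α) ^ n = proj m ℓ (inl β) ^ n := by
    rw [← map_zpow, h', map_zpow]
  by_cases hα : proj m ℓ (inl α) ^ n = 1
  · exact isConj_of_isOfFinOrder_proj (isOfFinOrder_iff_zpow_eq_one.2 ⟨n, hn, hα⟩)
      (isOfFinOrder_iff_zpow_eq_one.2 ⟨n, hn, hproj ▸ hα⟩) (deg_eq_of_zpow_eq hn h')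
  · have hcomm : Commute (proj m ℓ (inl α)) (proj m ℓ (inl β)) :=
      isCommutationTransitive_cyclicFreeProduct m ℓ hα (Commute.self_zpow _ n)
        (hproj ▸ Commute.self_zpow _ n)
    have hαβ : Commute α β := (commute_map_iff inl_injective).1 (commute_of_commute_proj hcomm)
    have hone : (α * β⁻¹) ^ n = 1 := by
      rw [hαβ.inv_right.mul_zpow, h, inv_zpow, mul_inv_cancel]
    rw [mul_inv_eq_one.1 (eq_one_of_zpow_eq_one hn hone)]
end

section
/- Let m, ℓ, m′, ℓ′ be positive integers. The groups G(m,ℓ) and G(m′,ℓ′) are isomorphic if and only if either (1 ∈ {m,ℓ} and 1 ∈ {m′,ℓ′}) — in which case both groups are isomorphic to ℤ — or (m′,ℓ′) ∈ {(m,ℓ),(ℓ,m)}. -/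
/-!
The group `G(m,ℓ)` determines the number of homomorphisms from it to any finite group `K`. Such a
homomorphism amounts to a sequence `P` in `K`, the images of the partial products `s(0,i)`, on
which translation by `m` is a left multiplication and translation by `ℓ` a right multiplication;
inverting `P` exchanges `m` and `ℓ`. Write `(m,ℓ) = (d * k, d * l)` with `k` and `l` coprime. By
Bézout, `P` is determined by `P m`, `P ℓ`, `P 1`, …, `P (d - 1)`, subject only to
`(P m) ^ l = (P ℓ) ^ k =: z` and to `P 1`, …, `P (d - 1)` commuting with `z`. Hence
`|Hom(G(m,ℓ), K)| = ∑ z, r_k(z) * r_l(z) * |C(z)| ^ (d - 1)`, where `r_k(z)` counts the `k`-th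
roots of `z`.

For commutative `K` this is `|K| ^ d`, which detects `d`. For the group of affine maps over `𝔽_q`
with linear part in the cyclic group of order `h ∣ q - 1`, comparing the counts for two pairs
`(k,l)` gives an identity between `q` and the products and sums of `gcd(h,k)` and `gcd(h,l)`. With
`h` a common multiple it recovers `k * l` and `k + l` if `1 < d`. If `d = 1` it only says that
`(gcd(h,k) - 1) * (gcd(h,l) - 1)` is an invariant for each `h`, which still determines `{k,l}`
unless `1 ∈ {k,l}`.
-/

section CircularSequences

variable {m ℓ : ℕ} {K : Type*} [Group K]

lemma circS_zero_right (i : ZMod m) : circS m ℓ i 0 = 1 := by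
  simp [circS]

lemma circS_succ (i : ZMod m) (p : ℕ) :
    circS m ℓ i (p + 1) = circS m ℓ i p * circGen m ℓ (i + p) := by
  simp [circS, List.range_succ]

lemma circS_add (i : ZMod m) (p q : ℕ) :
    circS m ℓ i (p + q) = circS m ℓ i p * circS m ℓ (i + p) q := by
  induction q with
  | zero => simp [circS_zero_right]
  | succ q ih =>
    rw [← add_assoc, circS_succ, circS_succ, ih, Nat.cast_add, mul_assoc, add_assoc]

lemma circGen_natCast (j : ℕ) :
    circGen m ℓ (j : ZMod m) = (circS m ℓ 0 j)⁻¹ * circS m ℓ 0 (j + 1) := by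
  rw [circS_succ, zero_add, inv_mul_cancel_left]

lemma circS_eq_mk (i : ZMod m) (p : ℕ) :
    circS m ℓ i p = PresentedGroup.mk (circRels m ℓ) (circWord m i p) := by
  simp [circS, circWord, map_list_prod, circGen, PresentedGroup.of, Function.comp_def]

lemma circS_add_one (i : ZMod m) : circS m ℓ (i + 1) ℓ = circS m ℓ i ℓ := by
  rw [eq_comm, circS_eq_mk, circS_eq_mk, ← mul_inv_eq_one, ← map_inv, ← map_mul]
  exact PresentedGroup.one_of_mem ⟨i, rfl⟩

lemma circS_natCast (j : ℕ) : circS m ℓ (j : ZMod m) ℓ = circS m ℓ 0 ℓ := by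
  induction j with
  | zero => rw [Nat.cast_zero]
  | succ j ih => rw [Nat.cast_succ, circS_add_one, ih]

/-- A sequence on which translation by `m` acts as a left multiplication and translation by `ℓ` as
a right multiplication, normalised by `P 0 = 1` (which follows from either equation at `i = 0`).
It encodes a homomorphism out of `G(m,ℓ)` through its values on the partial products `s(0,i)`. -/
structure IsCircSeq (m ℓ : ℕ) (P : ℕ → K) : Prop where
  left (i : ℕ) : P (m + i) = P m * P i
  right (i : ℕ) : P (i + ℓ) = P i * P ℓ

lemma IsCircSeq.zero {P : ℕ → K} (hP : IsCircSeq m ℓ P) : P 0 = 1 := by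
  simpa using hP.left 0

lemma IsCircSeq.inv {P : ℕ → K} (hP : IsCircSeq m ℓ P) : IsCircSeq ℓ m fun i => (P i)⁻¹ where
  left i := by rw [add_comm, hP.right, mul_inv_rev]
  right i := by rw [add_comm, hP.left, mul_inv_rev]

lemma isCircSeq_circS (φ : CircularGroup m ℓ →* K) :
    IsCircSeq m ℓ fun i => φ (circS m ℓ 0 i) where
  left i := by simp [circS_add]
  right i := by simp [circS_add, circS_natCast]

namespace IsCircSeq

/-- The image `P_j⁻¹ P_{j+1}` of the generator `a_j` under the homomorphism encoded by `P`. -/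
def step (m : ℕ) (P : ℕ → K) (i : ZMod m) : K := (P i.val)⁻¹ * P (i.val + 1)

variable {P : ℕ → K}

lemma step_natCast (hP : IsCircSeq m ℓ P) (j : ℕ) :
    step m P (j : ZMod m) = (P j)⁻¹ * P (j + 1) := by
  have hperiodic : Function.Periodic (fun i => (P i)⁻¹ * P (i + 1)) m := fun i => by
    simp only [add_comm i m, add_assoc, hP.left, mul_inv_rev, inv_mul_cancel_left, mul_assoc]
  simpa [step, ZMod.val_natCast] using hperiodic.map_mod_nat j

lemma lift_circWord (hP : IsCircSeq m ℓ P) (j p : ℕ) :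
    FreeGroup.lift (step m P) (circWord m (j : ZMod m) p) = (P j)⁻¹ * P (j + p) := by
  induction p with
  | zero => simp [circWord]
  | succ p ih =>
    have hsucc : circWord m (j : ZMod m) (p + 1) =
        circWord m (j : ZMod m) p * FreeGroup.of ((j + p : ℕ) : ZMod m) := by
      simp [circWord, List.range_succ]
    rw [hsucc, map_mul, ih, FreeGroup.lift_apply_of, hP.step_natCast, mul_assoc,
      mul_inv_cancel_left, add_assoc]

variable [NeZero m]

lemma lift_circRels (hP : IsCircSeq m ℓ P) :
    ∀ r ∈ circRels m ℓ, FreeGroup.lift (step m P) r = 1 := by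
  rintro _ ⟨i, rfl⟩
  obtain ⟨j, rfl⟩ := ZMod.natCast_zmod_surjective i
  rw [map_mul, map_inv, mul_inv_eq_one, ← Nat.cast_succ, hP.lift_circWord, hP.lift_circWord,
    hP.right, hP.right, inv_mul_cancel_left, inv_mul_cancel_left]

/-- The homomorphism `a_j ↦ P_j⁻¹ P_{j+1}` encoded by a circular sequence. -/
def toHom (hP : IsCircSeq m ℓ P) : CircularGroup m ℓ →* K :=
  PresentedGroup.toGroup hP.lift_circRels

@[simp]
lemma toHom_circS (hP : IsCircSeq m ℓ P) (j : ℕ) : hP.toHom (circS m ℓ 0 j) = P j := by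
  have hlift := hP.lift_circWord 0 j
  rw [Nat.cast_zero, zero_add, hP.zero, inv_one, one_mul] at hlift
  rw [circS_eq_mk, ← hlift]
  rfl

end IsCircSeq

variable [NeZero m]

lemma CircularGroup.hom_ext {φ ψ : CircularGroup m ℓ →* K}
    (h : ∀ j : ℕ, φ (circS m ℓ 0 j) = ψ (circS m ℓ 0 j)) : φ = ψ := by
  refine PresentedGroup.ext fun i => ?_
  obtain ⟨j, rfl⟩ := ZMod.natCast_zmod_surjective i
  change φ (circGen m ℓ j) = ψ (circGen m ℓ j)
  simp only [circGen_natCast, map_mul, map_inv, h]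

/-- A homomorphism `G(m,ℓ) → K` amounts to the circular sequence of its values on `s(0,i)`. -/
def CircularGroup.homEquiv : (CircularGroup m ℓ →* K) ≃ {P : ℕ → K // IsCircSeq m ℓ P} where
  toFun φ := ⟨fun i => φ (circS m ℓ 0 i), isCircSeq_circS φ⟩
  invFun P := P.2.toHom
  left_inv φ := hom_ext fun j => by rw [IsCircSeq.toHom_circS]
  right_inv P := by ext j; exact P.2.toHom_circS j

lemma isCircSeq_inv_circS (m ℓ : ℕ) : IsCircSeq ℓ m fun i => (circS m ℓ 0 i)⁻¹ :=
  (isCircSeq_circS (MonoidHom.id (CircularGroup m ℓ))).inv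

/-- The isomorphism `G(m,ℓ) ≃ G(ℓ,m)` sending `s(0,i)` to `s(0,i)⁻¹`. -/
def CircularGroup.swap (m ℓ : ℕ) [NeZero m] [NeZero ℓ] :
    CircularGroup m ℓ ≃* CircularGroup ℓ m :=
  MonoidHom.toMulEquiv (isCircSeq_inv_circS ℓ m).toHom (isCircSeq_inv_circS m ℓ).toHom
    (hom_ext fun j => by simp) (hom_ext fun j => by simp)

lemma circS_one_eq_pow (j : ℕ) : circS 1 ℓ 0 j = circGen 1 ℓ 0 ^ j := by
  simp [circS, Subsingleton.elim _ (0 : ZMod 1)]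

lemma isCircSeq_ofAdd (m ℓ : ℕ) : IsCircSeq m ℓ fun i => Multiplicative.ofAdd (i : ℤ) where
  left i := by rw [Nat.cast_add, ofAdd_add]
  right i := by rw [Nat.cast_add, ofAdd_add]

/-- The group `G(1,ℓ)` is infinite cyclic, generated by `a_0`. -/
def CircularGroup.oneLeftEquiv (ℓ : ℕ) : CircularGroup 1 ℓ ≃* Multiplicative ℤ :=
  MonoidHom.toMulEquiv (isCircSeq_ofAdd 1 ℓ).toHom (zpowersHom _ (circGen 1 ℓ 0))
    (hom_ext fun j => by
      rw [MonoidHom.comp_apply, IsCircSeq.toHom_circS]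
      simp [circS_one_eq_pow])
    (MonoidHom.ext_mint (by
      have hgen : circGen 1 ℓ 0 = circS 1 ℓ 0 1 := by rw [circS_one_eq_pow, pow_one]
      simp [hgen]))

lemma CircularGroup.nonempty_mulEquiv_int [NeZero ℓ] (h : 1 ∈ ({m, ℓ} : Set ℕ)) :
    Nonempty (CircularGroup m ℓ ≃* Multiplicative ℤ) := by
  rcases h with rfl | rfl
  · exact ⟨oneLeftEquiv ℓ⟩
  · exact ⟨(swap m 1).trans (oneLeftEquiv m)⟩

end CircularSequences

section Parametrization

lemma exists_mul_eq_one_add_mul_of_coprime {k l : ℕ} (hk : k ≠ 0) (hkl : k.Coprime l) :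
    ∃ u v : ℕ, u * k = 1 + v * l := by
  rcases Nat.lt_trichotomy l 1 with hl | rfl | hl
  · obtain rfl : l = 0 := by lia
    exact ⟨1, 0, by simpa using hkl⟩
  · exact ⟨1, k - 1, by lia⟩
  · obtain ⟨u, -, hu⟩ := Nat.exists_mul_mod_eq_one_of_coprime hkl hl
    exact ⟨u, k * u / l, by rw [mul_comm u k, mul_comm _ l, ← hu, Nat.mod_add_div]⟩

variable {K : Type*} [Group K] {P : ℕ → K} {k l u v d : ℕ}

namespace IsCircSeq

variable {m ℓ : ℕ} (hP : IsCircSeq m ℓ P)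
include hP

lemma apply_add_mul_left (i a : ℕ) : P (i + a * m) = P m ^ a * P i := by
  induction a with
  | zero => simp
  | succ a ih =>
    rw [show i + (a + 1) * m = m + (i + a * m) by ring, hP.left, ih, pow_succ', mul_assoc]

lemma apply_add_mul_right (i a : ℕ) : P (i + a * ℓ) = P i * P ℓ ^ a := by
  induction a with
  | zero => simp
  | succ a ih => rw [add_mul, one_mul, ← add_assoc, hP.right, ih, pow_succ, mul_assoc]

end IsCircSeq

/-- The sequence with `P i = x i` for `i < d` and `P (i + d) = C ^ u * P i * (D ^ v)⁻¹`, where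
`x` is read modulo `d`. Every circular sequence for `(d * k, d * l)` has this form, with
`C = P (d * k)` and `D = P (d * l)`, as soon as `u * k = 1 + v * l`. -/
def bezoutSeq (u v : ℕ) {d : ℕ} [NeZero d] (C D : K) (x : Fin d → K) (i : ℕ) : K :=
  C ^ (u * (i / d)) * x (Fin.ofNat d i) * (D ^ (v * (i / d)))⁻¹

lemma IsCircSeq.eq_bezoutSeq [NeZero d] (hP : IsCircSeq (d * k) (d * l) P)
    (huv : u * k = 1 + v * l) :
    P = bezoutSeq u v (P (d * k)) (P (d * l)) fun r : Fin d => P r := by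
  ext i
  rw [bezoutSeq, Fin.val_ofNat, eq_mul_inv_iff_mul_eq, ← hP.apply_add_mul_right,
    ← hP.apply_add_mul_left]
  congr 1
  linear_combination (exp := 1) (Nat.mod_add_div i d).symm + d * (i / d) * huv.symm

variable {C D : K}

section Bezout

variable (huv : u * k = 1 + v * l) {y : K} (h : SemiconjBy y (D ^ k) (C ^ l))
include huv h

lemma pow_mul_mul_pow_inv_eq_mul : C ^ (u * k) * y * (D ^ (v * k))⁻¹ = C * y := by
  rw [huv, pow_add, pow_one, mul_comm v l, mul_comm v k, pow_mul, pow_mul, mul_assoc C,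
    ← (h.pow_right v).eq, ← mul_assoc, mul_inv_cancel_right]

lemma pow_mul_mul_pow_inv_eq_mul' : C ^ (u * l) * y * (D ^ (v * l))⁻¹ = y * D := by
  rw [mul_inv_eq_iff_eq_mul, mul_assoc, ← pow_succ', add_comm, ← huv, mul_comm u l,
    mul_comm u k, pow_mul, pow_mul, (h.pow_right u).eq]

end Bezout

section bezoutSeq

variable [NeZero d] {x : Fin d → K}

lemma bezoutSeq_of_lt (r : Fin d) : bezoutSeq u v C D x r = x r := by
  simp [bezoutSeq, Nat.div_eq_of_lt r.2]

lemma bezoutSeq_add_mul (i a : ℕ) :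
    bezoutSeq u v C D x (i + d * a) =
      C ^ (u * (i / d)) * (C ^ (u * a) * x (Fin.ofNat d i) * (D ^ (v * a))⁻¹) *
        (D ^ (v * (i / d)))⁻¹ := by
  have hmod : Fin.ofNat d (i + d * a) = Fin.ofNat d i := by ext; simp
  rw [bezoutSeq, hmod, Nat.add_mul_div_left _ _ (Nat.pos_of_neZero d), mul_add, mul_add, pow_add,
    pow_add, mul_inv_rev]
  simp only [mul_assoc]

variable (huv : u * k = 1 + v * l) (hx : ∀ r, SemiconjBy (x r) (D ^ k) (C ^ l))
include huv hx

lemma bezoutSeq_add_mul_left (i : ℕ) :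
    bezoutSeq u v C D x (i + d * k) = C * bezoutSeq u v C D x i := by
  rw [bezoutSeq_add_mul, pow_mul_mul_pow_inv_eq_mul huv (hx _), ← mul_assoc,
    (Commute.pow_self C _).eq, bezoutSeq, mul_assoc C, mul_assoc C]

lemma bezoutSeq_add_mul_right (i : ℕ) :
    bezoutSeq u v C D x (i + d * l) = bezoutSeq u v C D x i * D := by
  rw [bezoutSeq_add_mul, pow_mul_mul_pow_inv_eq_mul' huv (hx _), bezoutSeq, ← mul_assoc,
    mul_assoc _ D, mul_assoc _ _ D, ((Commute.self_pow D _).inv_right).eq]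

variable (hx0 : x 0 = 1)
include hx0

lemma bezoutSeq_mul_left : bezoutSeq u v C D x (d * k) = C := by
  have hzero : bezoutSeq u v C D x 0 = 1 := (bezoutSeq_of_lt 0).trans hx0
  simpa [hzero] using bezoutSeq_add_mul_left huv hx 0

lemma bezoutSeq_mul_right : bezoutSeq u v C D x (d * l) = D := by
  have hzero : bezoutSeq u v C D x 0 = 1 := (bezoutSeq_of_lt 0).trans hx0
  simpa [hzero] using bezoutSeq_add_mul_right huv hx 0

lemma isCircSeq_bezoutSeq : IsCircSeq (d * k) (d * l) (bezoutSeq u v C D x) where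
  left i := by rw [add_comm, bezoutSeq_add_mul_left huv hx, bezoutSeq_mul_left huv hx hx0]
  right i := by rw [bezoutSeq_add_mul_right huv hx, bezoutSeq_mul_right huv hx hx0]

end bezoutSeq

lemma IsCircSeq.semiconjBy (hP : IsCircSeq (d * k) (d * l) P) (i : ℕ) :
    SemiconjBy (P i) (P (d * l) ^ k) (P (d * k) ^ l) := by
  rw [SemiconjBy, ← hP.apply_add_mul_left, ← hP.apply_add_mul_right]
  congr 1
  ring

lemma IsCircSeq.pow_eq_pow (hP : IsCircSeq (d * k) (d * l) P) :
    P (d * k) ^ l = P (d * l) ^ k := by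
  simpa [hP.zero, SemiconjBy, eq_comm] using hP.semiconjBy 0

lemma semiconjBy_cons_one {n : ℕ} {z : K} (hD : D ^ k = z) (hC : C ^ l = z)
    (y : Fin n → Subgroup.centralizer {z}) (r : Fin (n + 1)) :
    SemiconjBy ((Fin.cons 1 fun r => y r : Fin (n + 1) → K) r) (D ^ k) (C ^ l) := by
  rw [hD, hC]
  refine Fin.cases (SemiconjBy.one_left z) (fun r => ?_) r
  exact Subgroup.mem_centralizer_singleton_iff.mp (y r).2

/-- The circular sequences `P` with `P (d * l) ^ k = z`, where `d = n + 1`, are determined by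
`P (d * l)`, `P (d * k)` and `P 1, …, P n`, the first two being arbitrary roots of `z` and the
others arbitrary elements of the centralizer of `z`. -/
def circSeqFiberEquiv (n : ℕ) (huv : u * k = 1 + v * l) (z : K) :
    {P : {P : ℕ → K // IsCircSeq ((n + 1) * k) ((n + 1) * l) P} // P.1 ((n + 1) * l) ^ k = z} ≃
      {D : K // D ^ k = z} × {C : K // C ^ l = z} × (Fin n → Subgroup.centralizer {z}) where
  toFun P := ⟨⟨P.1.1 ((n + 1) * l), P.2⟩, ⟨P.1.1 ((n + 1) * k), P.1.2.pow_eq_pow.trans P.2⟩,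
    fun r => ⟨P.1.1 (r + 1), Subgroup.mem_centralizer_singleton_iff.mpr <| by
      have h := P.1.2.semiconjBy (r + 1)
      rwa [P.1.2.pow_eq_pow, P.2] at h⟩⟩
  invFun y :=
    have hx := semiconjBy_cons_one y.1.2 y.2.1.2 y.2.2
    ⟨⟨bezoutSeq u v y.2.1 y.1 (Fin.cons 1 fun r => y.2.2 r),
      isCircSeq_bezoutSeq huv hx (Fin.cons_zero _ _)⟩,
      (congrArg (· ^ k) (bezoutSeq_mul_right huv hx (Fin.cons_zero _ _))).trans y.1.2⟩
  left_inv P := by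
    refine Subtype.ext (Subtype.ext ?_)
    conv_rhs => rw [P.1.2.eq_bezoutSeq huv]
    refine congrArg (bezoutSeq u v _ _) (funext fun r => ?_)
    refine Fin.cases ?_ (fun r => ?_) r
    · simp [P.1.2.zero]
    · simp
  right_inv y := by
    have hx := semiconjBy_cons_one y.1.2 y.2.1.2 y.2.2
    refine Prod.ext (Subtype.ext ?_) (Prod.ext (Subtype.ext ?_) (funext fun r => Subtype.ext ?_))
    · exact bezoutSeq_mul_right huv hx (Fin.cons_zero _ _)
    · exact bezoutSeq_mul_left huv hx (Fin.cons_zero _ _)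
    · exact bezoutSeq_of_lt r.succ

/-- The number of solutions of `x ^ k = z`. -/
noncomputable def rootCard (k : ℕ) (z : K) : ℕ := Nat.card {x : K // x ^ k = z}

theorem CircularGroup.card_hom [Fintype K] (n : ℕ) [NeZero k] (hkl : k.Coprime l) :
    Nat.card (CircularGroup ((n + 1) * k) ((n + 1) * l) →* K) =
      ∑ z : K, rootCard k z * rootCard l z * Nat.card (Subgroup.centralizer {z}) ^ n := by
  obtain ⟨u, v, huv⟩ := exists_mul_eq_one_add_mul_of_coprime (NeZero.ne k) hkl
  let e := homEquiv.trans <| (Equiv.sigmaFiberEquiv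
    fun P : {P : ℕ → K // IsCircSeq ((n + 1) * k) ((n + 1) * l) P} =>
      P.1 ((n + 1) * l) ^ k).symm.trans (Equiv.sigmaCongrRight (circSeqFiberEquiv n huv))
  rw [Nat.card_congr e, Nat.card_sigma]
  simp [rootCard, Nat.card_fun, mul_assoc]

end Parametrization

section RootCounts

variable {k l : ℕ}

lemma sum_rootCard {K : Type*} [Group K] [Fintype K] (k : ℕ) :
    ∑ z : K, rootCard k z = Nat.card K := by
  simp only [rootCard]
  rw [← Nat.card_sigma, Nat.card_congr (Equiv.sigmaFiberEquiv fun x : K => x ^ k)]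

variable {A : Type*} [CommGroup A]

section Bezout

variable {u v : ℕ} (huv : u * k = 1 + v * l) {C D : A} (h : D ^ k = C ^ l)
include huv h

lemma pow_div_pow_pow_left : (C ^ u / D ^ v) ^ k = C := by
  simpa [div_eq_mul_inv, mul_pow, pow_mul] using
    pow_mul_mul_pow_inv_eq_mul huv (D := D) (y := 1) (by simpa [SemiconjBy] using h)

lemma pow_div_pow_pow_right : (C ^ u / D ^ v) ^ l = D := by
  simpa [div_eq_mul_inv, mul_pow, pow_mul] using
    pow_mul_mul_pow_inv_eq_mul' huv (D := D) (y := 1) (by simpa [SemiconjBy] using h)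

end Bezout

/-- In a commutative group, a `k * l`-th root `a` of `z` amounts to a `k`-th root and an `l`-th
root of `z`, namely `a ^ l` and `a ^ k`. -/
def rootEquivProd {u v : ℕ} (huv : u * k = 1 + v * l) (z : A) :
    {a : A // a ^ (k * l) = z} ≃ {D : A // D ^ k = z} × {C : A // C ^ l = z} where
  toFun a := ⟨⟨a.1 ^ l, by rw [← pow_mul', a.2]⟩, ⟨a.1 ^ k, by rw [← pow_mul, a.2]⟩⟩
  invFun p := ⟨p.2.1 ^ u / p.1.1 ^ v, by
    rw [pow_mul, pow_div_pow_pow_left huv (p.1.2.trans p.2.2.symm), p.2.2]⟩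
  left_inv a := Subtype.ext <| by
    dsimp only
    rw [← pow_mul', ← pow_mul', huv, pow_add, pow_one, mul_div_cancel_right]
  right_inv p := Prod.ext
    (Subtype.ext (pow_div_pow_pow_right huv (p.1.2.trans p.2.2.symm)))
    (Subtype.ext (pow_div_pow_pow_left huv (p.1.2.trans p.2.2.symm)))

lemma rootCard_mul_of_coprime [NeZero k] (hkl : k.Coprime l) (z : A) :
    rootCard (k * l) z = rootCard k z * rootCard l z := by
  obtain ⟨u, v, huv⟩ := exists_mul_eq_one_add_mul_of_coprime (NeZero.ne k) hkl
  rw [rootCard, Nat.card_congr (rootEquivProd huv z), Nat.card_prod, rootCard, rootCard]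

lemma sum_rootCard_mul_rootCard [Fintype A] [NeZero k] (hkl : k.Coprime l) :
    ∑ z : A, rootCard k z * rootCard l z = Nat.card A := by
  simp only [← rootCard_mul_of_coprime hkl, sum_rootCard]

lemma rootCard_one_of_isCyclic [Finite A] [IsCyclic A] (k : ℕ) :
    rootCard k (1 : A) = (Nat.card A).gcd k := by
  rw [← IsCyclic.card_powMonoidHom_ker]
  rfl

lemma CircularGroup.card_hom_of_comm [Finite A] (n : ℕ) [NeZero k] (hkl : k.Coprime l) :
    Nat.card (CircularGroup ((n + 1) * k) ((n + 1) * l) →* A) = Nat.card A ^ (n + 1) := by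
  have := Fintype.ofFinite A
  have hcentralizer (z : A) : Nat.card (Subgroup.centralizer {z}) = Nat.card A := by
    rw [Subgroup.centralizer_eq_top_iff_subset.mpr (by simp [CommGroup.center_eq_top]),
      Subgroup.card_top]
  simp_rw [card_hom n hkl, hcentralizer, ← Finset.sum_mul, sum_rootCard_mul_rootCard hkl,
    pow_succ']

end RootCounts

section AffineGroup

variable {F : Type*} [Field F] {H : Subgroup Fˣ}

/-- The group of affine maps `t ↦ b * t + s` of the line `F` with `b ∈ H`; it has enough
non-central elements to see the orders of the roots of unity that a circular group involves. -/
abbrev AffineGroup (H : Subgroup Fˣ) : Type _ :=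
  Multiplicative F ⋊[(MulAutMultiplicative F).symm.toMonoidHom.comp
    (DistribMulAction.toAddAut H F)] H

namespace AffineGroup

/-- The translation part `s` of `t ↦ b * t + s`. -/
def shift (x : AffineGroup H) : F := x.left.toAdd

/-- The linear part `b` of `t ↦ b * t + s`, as an element of `F`. -/
def slope (x : AffineGroup H) : F := (x.right : Fˣ)

variable (x y z : AffineGroup H)

@[simp] lemma shift_one : (1 : AffineGroup H).shift = 0 := rfl

@[simp] lemma shift_mul : (x * y).shift = x.shift + x.slope * y.shift := rfl

variable {x y z}

lemma slope_eq_one : x.slope = 1 ↔ x.right = 1 := by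
  rw [slope, Units.val_eq_one, OneMemClass.coe_eq_one]

lemma right_pow (k : ℕ) : (x ^ k).right = x.right ^ k :=
  map_pow SemidirectProduct.rightHom x k

lemma slope_pow (k : ℕ) : (x ^ k).slope = x.slope ^ k := by
  simp [slope, right_pow]

lemma slope_pow_eq_one {k : ℕ} (hx : x.right ^ k = 1) : x.slope ^ k = 1 := by
  rw [← slope_pow, slope_eq_one, right_pow, hx]

lemma shift_pow (k : ℕ) : (x ^ k).shift = (∑ i ∈ Finset.range k, x.slope ^ i) * x.shift := by
  induction k with
  | zero => simp
  | succ k ih => rw [pow_succ, shift_mul, ih, slope_pow, Finset.sum_range_succ, add_mul]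

lemma ext_iff' : x = y ↔ x.right = y.right ∧ x.shift = y.shift := by
  rw [SemidirectProduct.ext_iff, and_comm]
  rfl

lemma pow_eq_iff {k : ℕ} : x ^ k = z ↔
    x.right ^ k = z.right ∧ (∑ i ∈ Finset.range k, x.slope ^ i) * x.shift = z.shift := by
  rw [ext_iff', right_pow, shift_pow]

lemma mem_centralizer_singleton_iff : x ∈ Subgroup.centralizer {z} ↔
    (1 - z.slope) * x.shift = (1 - x.slope) * z.shift := by
  rw [Subgroup.mem_centralizer_singleton_iff, ext_iff', SemidirectProduct.mul_right,
    SemidirectProduct.mul_right, mul_comm x.right, shift_mul, shift_mul, eq_self, true_and]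
  grind

lemma card_right_mem_shift_eq (B : Set H) (f : H → F) :
    Nat.card {x : AffineGroup H // x.right ∈ B ∧ x.shift = f x.right} = Nat.card B :=
  Nat.card_congr
    { toFun x := ⟨x.1.right, x.2.1⟩
      invFun b := ⟨⟨.ofAdd (f b), b⟩, b.2, rfl⟩
      left_inv x := Subtype.ext <| ext_iff'.mpr ⟨rfl, x.2.2.symm⟩
      right_inv _ := rfl }

lemma card_right_mem (B : Set H) :
    Nat.card {x : AffineGroup H // x.right ∈ B} = Nat.card F * Nat.card B := by
  rw [← Nat.card_prod]
  exact Nat.card_congr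
    { toFun x := (x.1.shift, ⟨x.1.right, x.2⟩)
      invFun p := ⟨⟨.ofAdd p.1, p.2⟩, p.2.2⟩
      left_inv _ := rfl
      right_inv _ := rfl }

lemma card_centralizer_of_right_ne_one (hz : z.right ≠ 1) :
    Nat.card (Subgroup.centralizer {z}) = Nat.card H := by
  rw [← Nat.card_univ (α := H), ← card_right_mem_shift_eq Set.univ
    fun b => (1 - (b : Fˣ)) * z.shift / (1 - z.slope)]
  refine Nat.card_congr (Equiv.subtypeEquivRight fun x => ?_)
  have hslope : 1 - z.slope ≠ 0 := sub_ne_zero.mpr fun h => hz (slope_eq_one.mp h.symm)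
  rw [mem_centralizer_singleton_iff, eq_div_iff hslope, mul_comm]
  simp [slope]

lemma rootCard_of_right_ne_one (hz : z.right ≠ 1) (k : ℕ) :
    rootCard k z = rootCard k z.right := by
  refine .trans ?_ (card_right_mem_shift_eq {b | b ^ k = z.right}
    fun b => z.shift / ∑ i ∈ Finset.range k, ((b : Fˣ) : F) ^ i)
  refine Nat.card_congr (Equiv.subtypeEquivRight fun x => ?_)
  rw [pow_eq_iff]
  refine and_congr_right fun hx => ?_
  have hsum : ∑ i ∈ Finset.range k, x.slope ^ i ≠ 0 := fun h => hz <| by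
    rw [← hx, ← right_pow, ← slope_eq_one, slope_pow, ← sub_eq_zero, ← geom_sum_mul, h, zero_mul]
  rw [mul_comm, ← eq_div_iff hsum]
  rfl

lemma card_centralizer_of_shift_ne_zero (hz : z.right = 1) (hz0 : z.shift ≠ 0) :
    Nat.card (Subgroup.centralizer {z}) = Nat.card F := by
  refine .trans (Nat.card_congr (Equiv.subtypeEquivRight fun x => ?_))
    ((card_right_mem {(1 : H)}).trans (by simp))
  rw [mem_centralizer_singleton_iff, slope_eq_one.mpr hz, sub_self, zero_mul, eq_comm,
    mul_eq_zero_iff_right hz0, sub_eq_zero, eq_comm, slope_eq_one, Set.mem_singleton_iff]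

lemma rootCard_of_shift_ne_zero (hz : z.right = 1) (hz0 : z.shift ≠ 0) {k : ℕ}
    (hk : (k : F) ≠ 0) : rootCard k z = 1 := by
  refine .trans (Nat.card_congr (Equiv.subtypeEquivRight fun x => ?_))
    ((card_right_mem_shift_eq {(1 : H)} fun _ => z.shift / k).trans (by simp))
  rw [pow_eq_iff, hz, eq_div_iff hk, mul_comm _ (k : F), Set.mem_singleton_iff]
  constructor
  · rintro ⟨hx, hshift⟩
    have hsum : ∑ i ∈ Finset.range k, x.slope ^ i ≠ 0 :=
      left_ne_zero_of_mul (hshift ▸ hz0)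
    have hx1 : x.slope = 1 := by
      rw [← sub_eq_zero, ← mul_eq_zero_iff_left hsum, geom_sum_mul, slope_pow_eq_one hx, sub_self]
    exact ⟨slope_eq_one.mp hx1, by simpa [hx1] using hshift⟩
  · rintro ⟨hx, hshift⟩
    simpa [hx, slope_eq_one.mpr hx] using hshift

lemma setOf_pow_eq_one {k : ℕ} (hk : (k : F) ≠ 0) :
    {x : AffineGroup H | x ^ k = 1} = insert 1 {x | x.right ∈ {b : H | b ^ k = 1} \ {1}} := by
  ext x
  simp only [Set.mem_insert_iff, Set.mem_ofPred_eq, Set.mem_sdiff, Set.mem_singleton_iff]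
  by_cases hx : x.right = 1
  · rw [pow_eq_iff, ext_iff' (y := 1)]
    simp [hx, slope_eq_one.mpr hx, hk]
  · have hx1 : x ≠ 1 := fun h => hx (congrArg _ h)
    simp only [hx1, hx, not_false_eq_true, and_true, false_or, pow_eq_iff,
      SemidirectProduct.one_right, and_iff_left_iff_imp]
    intro hpow
    have hsum : ∑ i ∈ Finset.range k, x.slope ^ i = 0 := by
      rw [← mul_eq_zero_iff_right (sub_ne_zero.mpr (mt slope_eq_one.mp hx)), geom_sum_mul,
        slope_pow_eq_one hpow, sub_self]
    rw [hsum, zero_mul, shift_one]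

variable [Finite F]

instance : Finite (AffineGroup H) :=
  Finite.of_equiv _ SemidirectProduct.equivProd.symm

lemma rootCard_one_add_card {k : ℕ} (hk : (k : F) ≠ 0) :
    rootCard k (1 : AffineGroup H) + Nat.card F = Nat.card F * rootCard k (1 : H) + 1 := by
  have hH : Nat.card ↥({b : H | b ^ k = 1} \ {1}) + 1 = rootCard k (1 : H) :=
    Set.ncard_sdiff_singleton_add_one (one_pow k)
  have hK : rootCard k (1 : AffineGroup H) = Set.ncard {x : AffineGroup H | x ^ k = 1} := rfl
  rw [hK, setOf_pow_eq_one hk, Set.ncard_insert_of_notMem (by simp), ← hH]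
  have hcard := card_right_mem ({b : H | b ^ k = 1} \ {1})
  rw [← Set.coe_ofPred, Nat.card_coe_set_eq] at hcard
  rw [hcard]
  ring

lemma sum_eq_of_forall_right [Fintype (AffineGroup H)] [Fintype H] {R : Type*} [CommRing R]
    {f : AffineGroup H → R} {a : R} {g : H → R}
    (ha : ∀ z, z.right = 1 → z.shift ≠ 0 → f z = a) (hg : ∀ z, z.right ≠ 1 → f z = g z.right) :
    ∑ z, f z = f 1 + (Nat.card F - 1) * a + Nat.card F * (∑ b, g b - g 1) := by
  classical
  have := Fintype.ofFinite F
  have htranslations : ∑ s, f ⟨s, 1⟩ = f 1 + (Nat.card F - 1) * a := by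
    rw [← Finset.add_sum_erase _ _ (Finset.mem_univ 1),
      Finset.sum_congr rfl fun s hs => ha ⟨s, 1⟩ rfl <| toAdd_eq_zero.not.mpr <|
        Finset.ne_of_mem_erase hs, Finset.sum_const,
      Finset.card_erase_of_mem (Finset.mem_univ _), Finset.card_univ, nsmul_eq_mul,
      Nat.cast_sub Fintype.card_pos, Fintype.card_multiplicative, Nat.card_eq_fintype_card,
      Nat.cast_one]
    rfl
  have hothers (b : H) (hb : b ≠ 1) : ∑ s, f ⟨s, b⟩ = Nat.card F * g b := by
    rw [Finset.sum_congr rfl fun s _ => hg ⟨s, b⟩ hb]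
    simp
  calc ∑ z, f z = ∑ b, ∑ s, f ⟨s, b⟩ := by
        rw [← Fintype.sum_prod_type_right']
        exact Fintype.sum_equiv SemidirectProduct.equivProd _ _ fun _ => rfl
    _ = _ := by
        rw [← Finset.add_sum_erase _ _ (Finset.mem_univ 1), htranslations,
          Finset.sum_congr rfl fun b hb => hothers b (Finset.ne_of_mem_erase hb),
          ← Finset.mul_sum, Finset.sum_erase_eq_sub (Finset.mem_univ 1)]

variable {k l : ℕ}

theorem card_hom (hk : (k : F) ≠ 0) (hl : (l : F) ≠ 0) (hkl : k.Coprime l) (n : ℕ) :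
    (Nat.card (CircularGroup ((n + 1) * k) ((n + 1) * l) →* AffineGroup H) : ℤ) =
      (Nat.card F * rootCard k (1 : H) - Nat.card F + 1) *
        (Nat.card F * rootCard l (1 : H) - Nat.card F + 1) * (Nat.card F * Nat.card H) ^ n +
      (Nat.card F - 1) * Nat.card F ^ n +
      Nat.card F * ((Nat.card H - rootCard (k * l) (1 : H)) * Nat.card H ^ n) := by
  have : NeZero k := ⟨by rintro rfl; simp at hk⟩
  have := Fintype.ofFinite (AffineGroup H)
  have := Fintype.ofFinite H
  have hone (m : ℕ) (hm : (m : F) ≠ 0) : (rootCard m (1 : AffineGroup H) : ℤ) =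
      Nat.card F * rootCard m (1 : H) - Nat.card F + 1 := by
    have h := rootCard_one_add_card (H := H) hm
    zify at h
    linear_combination h
  have hcentralizer : Nat.card (Subgroup.centralizer {(1 : AffineGroup H)}) =
      Nat.card F * Nat.card H := by
    rw [Subgroup.centralizer_eq_top_iff_subset.mpr (by simp), Subgroup.card_top,
      SemidirectProduct.card]
    rfl
  rw [CircularGroup.card_hom n hkl, Nat.cast_sum,
    sum_eq_of_forall_right (a := (Nat.card F : ℤ) ^ n)
      (g := fun b : H => (rootCard (k * l) b : ℤ) * Nat.card H ^ n),
    ← Finset.sum_mul, ← Nat.cast_sum, sum_rootCard, ← hone k hk, ← hone l hl, hcentralizer]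
  · push_cast
    ring
  · intro z hz hz0
    simp [card_centralizer_of_shift_ne_zero hz hz0, rootCard_of_shift_ne_zero hz hz0, hk, hl]
  · intro z hz
    simp [card_centralizer_of_right_ne_one hz, rootCard_of_right_ne_one hz,
      rootCard_mul_of_coprime hkl]

end AffineGroup

end AffineGroup

section Arithmetic

lemma eq_or_swap_of_mul_eq_of_add_eq {x y x' y' : ℕ} (hmul : x * y = x' * y')
    (hadd : x + y = x' + y') : (x' = x ∧ y' = y) ∨ (x' = y ∧ y' = x) := by
  have h : ((x : ℤ) - x') * (x - y') = 0 := by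
    zify at hmul hadd
    linear_combination (x : ℤ) * hadd - hmul
  rcases mul_eq_zero.mp h with h | h <;> lia

lemma eq_zero_of_pow_sub_one_mul_eq {q P S : ℤ} {n : ℕ} (hn : n ≠ 0) (hq : 1 < q) (hP : |P| < q)
    (h : (q ^ (n + 1) - 1) * P = q ^ n * (q - 1) * S) : P = 0 ∧ S = 0 := by
  have hcoprime : IsCoprime q (q ^ (n + 1) - 1) := ⟨q ^ n, -1, by ring⟩
  have hdvd : q ∣ (q ^ (n + 1) - 1) * P :=
    h ▸ ((dvd_pow_self q hn).mul_right _).mul_right _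
  have hP0 : P = 0 := Int.eq_zero_of_abs_lt_dvd (hcoprime.dvd_of_dvd_mul_left hdvd) hP
  have hq0 : q ^ n * (q - 1) ≠ 0 :=
    mul_ne_zero (pow_ne_zero n (by lia)) (by lia)
  refine ⟨hP0, (mul_eq_zero_iff_left hq0).mp ?_⟩
  rw [← h, hP0, mul_zero]

lemma mul_dvd_of_gcd_sub_one_mul_eq {j k l : ℕ} (hk : 1 < k) (hl : 1 < l) (hkl : k.Coprime l)
    (h : ((j.gcd k : ℤ) - 1) * (j.gcd l - 1) = (k - 1) * (l - 1)) : k * l ∣ j := by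
  have hgcd {a : ℕ} (ha : 1 < a) : 0 < j.gcd a ∧ j.gcd a ≤ a :=
    ⟨Nat.gcd_pos_of_pos_right j (by lia), Nat.gcd_le_right j (by lia)⟩
  have hgcdk := hgcd hk
  have hgcdl := hgcd hl
  have hpos : (0 : ℤ) < (j.gcd k - 1) * (j.gcd l - 1) := h ▸ mul_pos (by lia) (by lia)
  obtain ⟨hk', hl'⟩ := (mul_eq_mul_iff_eq_and_eq_of_pos (by lia) (by lia)
    (pos_of_mul_pos_left hpos (by lia)) (by lia)).mp h
  exact hkl.mul_dvd_of_dvd_of_dvd (Nat.gcd_eq_right_iff_dvd.mp (by lia))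
    (Nat.gcd_eq_right_iff_dvd.mp (by lia))

variable {k l k' l' : ℕ}

lemma exists_ne_zero_gcd_eq (hk : k ≠ 0) (hl : l ≠ 0) (hk' : k' ≠ 0) (hl' : l' ≠ 0) :
    ∃ j : ℕ, j ≠ 0 ∧ j.gcd k = k ∧ j.gcd l = l ∧ j.gcd k' = k' ∧ j.gcd l' = l' :=
  ⟨k * l * (k' * l'), by positivity, Nat.gcd_eq_right ⟨l * (k' * l'), by ring⟩,
    Nat.gcd_eq_right ⟨k * (k' * l'), by ring⟩, Nat.gcd_eq_right ⟨k * l * l', by ring⟩,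
    Nat.gcd_eq_right ⟨k * l * k', by ring⟩⟩

lemma eq_or_swap_of_forall_gcd_sub_one_mul_eq (hk : k ≠ 0) (hl : l ≠ 0) (hk' : k' ≠ 0)
    (hl' : l' ≠ 0) (hkl : k.Coprime l) (hkl' : k'.Coprime l')
    (h : ∀ j : ℕ, j ≠ 0 →
      ((j.gcd k : ℤ) - 1) * (j.gcd l - 1) = (j.gcd k' - 1) * (j.gcd l' - 1)) :
    ((k = 1 ∨ l = 1) ∧ (k' = 1 ∨ l' = 1)) ∨ (k' = k ∧ l' = l) ∨ (k' = l ∧ l' = k) := by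
  have hsub : ((k : ℤ) - 1) * (l - 1) = (k' - 1) * (l' - 1) := by
    obtain ⟨j, hj, hjk, hjl, hjk', hjl'⟩ := exists_ne_zero_gcd_eq hk hl hk' hl'
    simpa only [hjk, hjl, hjk', hjl'] using h j hj
  by_cases h1 : k = 1 ∨ l = 1
  · have hzero : ((k' : ℤ) - 1) * (l' - 1) = 0 := by rcases h1 with rfl | rfl <;> simp [← hsub]
    exact .inl ⟨h1, by rcases mul_eq_zero.mp hzero with h | h <;> lia⟩
  · have hne : ((k' : ℤ) - 1) * (l' - 1) ≠ 0 := hsub ▸ mul_ne_zero (by lia) (by lia)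
    obtain ⟨hk1', hl1'⟩ := mul_ne_zero_iff.mp hne
    have hkl_dvd : k * l ∣ k' * l' := mul_dvd_of_gcd_sub_one_mul_eq (by lia) (by lia) hkl <| by
      rw [h _ (mul_ne_zero hk' hl'), hsub, Nat.gcd_mul_right_left, Nat.gcd_mul_left_left]
    have hkl_dvd' : k' * l' ∣ k * l := mul_dvd_of_gcd_sub_one_mul_eq (by lia) (by lia) hkl' <| by
      rw [← h _ (mul_ne_zero hk hl), ← hsub, Nat.gcd_mul_right_left, Nat.gcd_mul_left_left]
    have hmul : k * l = k' * l' := Nat.dvd_antisymm hkl_dvd hkl_dvd'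
    refine .inr (eq_or_swap_of_mul_eq_of_add_eq hmul ?_)
    zify at hmul ⊢
    linear_combination hmul - hsub

lemma exists_eq_succ_mul_coprime (m ℓ : ℕ) [NeZero m] :
    ∃ n k l, m = (n + 1) * k ∧ ℓ = (n + 1) * l ∧ k.Coprime l := by
  obtain ⟨k, l, hkl, hk, hl⟩ := Nat.exists_coprime m ℓ
  obtain ⟨n, hn⟩ := Nat.exists_eq_succ_of_ne_zero (Nat.gcd_ne_zero_left (NeZero.ne m) (n := ℓ))
  exact ⟨n, k, l, by rw [← Nat.succ_eq_add_one, ← hn, mul_comm, ← hk],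
    by rw [← Nat.succ_eq_add_one, ← hn, mul_comm, ← hl], hkl⟩

end Arithmetic

section Comparison

lemma exists_subgroup_units_zmod_card {q h : ℕ} [Fact q.Prime] (hq : q ≡ 1 [MOD h]) :
    ∃ H : Subgroup (ZMod q)ˣ, Nat.card H = h := by
  refine ⟨(powMonoidHom h).ker, ?_⟩
  have hdvd : h ∣ q - 1 := (Nat.modEq_iff_dvd' (Fact.out : q.Prime).one_le).mp hq.symm
  rw [IsCyclic.card_powMonoidHom_ker, Nat.card_eq_fintype_card, ZMod.card_units,
    Nat.gcd_eq_right hdvd]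

variable {k l k' l' n n' : ℕ} [NeZero k] [NeZero k']
  (hkl : k.Coprime l) (hkl' : k'.Coprime l')

include hkl hkl'

lemma eq_of_circularGroup_equiv
    (e : CircularGroup ((n + 1) * k) ((n + 1) * l) ≃*
      CircularGroup ((n' + 1) * k') ((n' + 1) * l')) : n = n' := by
  have hcard := Nat.card_congr
    (e.monoidHomCongrLeftEquiv (N := Multiplicative (ZMod 2)))
  rw [CircularGroup.card_hom_of_comm n hkl, CircularGroup.card_hom_of_comm n' hkl',
    Nat.card_congr Multiplicative.toAdd, Nat.card_zmod] at hcard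
  exact Nat.succ_injective (Nat.pow_right_injective le_rfl hcard)

variable [NeZero l] [NeZero l']
  (e : CircularGroup ((n + 1) * k) ((n + 1) * l) ≃*
    CircularGroup ((n + 1) * k') ((n + 1) * l'))
include e

lemma exists_gcd_identity_of_circularGroup_equiv {h : ℕ} (hh : h ≠ 0) : ∃ q : ℕ, h < q ∧
    ((q : ℤ) ^ (n + 1) - 1) * (h.gcd k * h.gcd l - h.gcd k' * h.gcd l') =
      q ^ n * (q - 1) * (h.gcd k + h.gcd l - (h.gcd k' + h.gcd l')) := by
  obtain ⟨q, hprime, hlt, hmod⟩ := Nat.exists_prime_gt_modEq_one (k + l + k' + l') hh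
  have : Fact q.Prime := ⟨hprime⟩
  have hcast (a : ℕ) [NeZero a] (ha : a < q) : (a : ZMod q) ≠ 0 := fun hzero =>
    Nat.not_dvd_of_pos_of_lt (Nat.pos_of_neZero a) ha ((ZMod.natCast_eq_zero_iff a q).mp hzero)
  obtain ⟨H, hH⟩ := exists_subgroup_units_zmod_card hmod
  have hhq : h < q := by
    have hle := Subgroup.card_le_card_group H
    rw [hH, Nat.card_eq_fintype_card, ZMod.card_units] at hle
    exact Nat.lt_of_le_pred hprime.pos hle
  refine ⟨q, hhq, ?_⟩
  have hcard := congrArg (Nat.cast : ℕ → ℤ)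
    (Nat.card_congr (e.monoidHomCongrLeftEquiv (N := AffineGroup H)))
  rw [AffineGroup.card_hom (hcast k (by lia)) (hcast l (by lia)) hkl,
    AffineGroup.card_hom (hcast k' (by lia)) (hcast l' (by lia)) hkl'] at hcard
  simp only [rootCard_one_of_isCyclic, Nat.card_zmod, hH, hkl.gcd_mul, hkl'.gcd_mul,
    Nat.cast_mul] at hcard
  have hne : (h : ℤ) ^ n * q ≠ 0 := by have := hprime.ne_zero; positivity
  refine mul_left_cancel₀ hne ?_
  linear_combination hcard

lemma coprime_parameters_of_circularGroup_equiv :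
    (n = 0 ∧ (k = 1 ∨ l = 1) ∧ (k' = 1 ∨ l' = 1)) ∨ (k' = k ∧ l' = l) ∨ (k' = l ∧ l' = k) := by
  have hk := NeZero.ne k
  have hl := NeZero.ne l
  have hk' := NeZero.ne k'
  have hl' := NeZero.ne l'
  rcases eq_or_ne n 0 with rfl | hn
  · have h := eq_or_swap_of_forall_gcd_sub_one_mul_eq hk hl hk' hl' hkl hkl' fun j hj => by
      obtain ⟨q, hq, h⟩ := exists_gcd_identity_of_circularGroup_equiv hkl hkl' e hj
      have hq1 : (q : ℤ) - 1 ≠ 0 := by lia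
      refine mul_left_cancel₀ hq1 ?_
      linear_combination h
    tauto
  · obtain ⟨j, hj, hjk, hjl, hjk', hjl'⟩ := exists_ne_zero_gcd_eq hk hl hk' hl'
    obtain ⟨q, hq, h⟩ := exists_gcd_identity_of_circularGroup_equiv hkl hkl' e hj
    rw [hjk, hjl, hjk', hjl'] at h
    have hle : k * l ≤ j := by
      rw [← hjk, ← hjl, ← hkl.gcd_mul]; exact Nat.gcd_le_left _ (by lia)
    have hle' : k' * l' ≤ j := by
      rw [← hjk', ← hjl', ← hkl'.gcd_mul]; exact Nat.gcd_le_left _ (by lia)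
    have habs : |(k : ℤ) * l - k' * l'| < q := by
      zify at hle hle' hq
      rw [abs_lt]
      constructor <;> nlinarith
    obtain ⟨hmul, hadd⟩ := eq_zero_of_pow_sub_one_mul_eq hn (by lia) habs h
    exact .inr (eq_or_swap_of_mul_eq_of_add_eq (by exact_mod_cast sub_eq_zero.mp hmul)
      (by exact_mod_cast sub_eq_zero.mp hadd))

end Comparison

lemma parameters_of_circularGroup_equiv {m ℓ m' ℓ' : ℕ} [NeZero m] [NeZero ℓ] [NeZero m']
    [NeZero ℓ'] (e : CircularGroup m ℓ ≃* CircularGroup m' ℓ') :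
    ((m = 1 ∨ ℓ = 1) ∧ (m' = 1 ∨ ℓ' = 1)) ∨ (m' = m ∧ ℓ' = ℓ) ∨ (m' = ℓ ∧ ℓ' = m) := by
  obtain ⟨n, k, l, rfl, rfl, hkl⟩ := exists_eq_succ_mul_coprime m ℓ
  obtain ⟨n', k', l', rfl, rfl, hkl'⟩ := exists_eq_succ_mul_coprime m' ℓ'
  have : NeZero k := ⟨right_ne_zero_of_mul (NeZero.ne ((n + 1) * k))⟩
  have : NeZero l := ⟨right_ne_zero_of_mul (NeZero.ne ((n + 1) * l))⟩
  have : NeZero k' := ⟨right_ne_zero_of_mul (NeZero.ne ((n' + 1) * k'))⟩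
  have : NeZero l' := ⟨right_ne_zero_of_mul (NeZero.ne ((n' + 1) * l'))⟩
  obtain rfl := eq_of_circularGroup_equiv hkl hkl' e
  rcases coprime_parameters_of_circularGroup_equiv hkl hkl' e with
    ⟨rfl, h⟩ | ⟨rfl, rfl⟩ | ⟨rfl, rfl⟩
  · simp only [zero_add, one_mul]; tauto
  · simp
  · simp

/-- Classification of circular groups up to isomorphism: `G(m,ℓ) ≅ G(m',ℓ')` if and only if
either `1 ∈ {m,ℓ}` and `1 ∈ {m',ℓ'}` (in which case both groups are isomorphic to `ℤ`), or
`(m',ℓ') ∈ {(m,ℓ),(ℓ,m)}`. -/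
theorem classification_circular_groups (m ℓ m' ℓ' : ℕ)
    (hm : 0 < m) (hℓ : 0 < ℓ) (hm' : 0 < m') (hℓ' : 0 < ℓ') :
    (Nonempty (CircularGroup m ℓ ≃* CircularGroup m' ℓ') ↔
      ((1 ∈ ({m, ℓ} : Set ℕ) ∧ 1 ∈ ({m', ℓ'} : Set ℕ)) ∨
        ((m', ℓ') = (m, ℓ) ∨ (m', ℓ') = (ℓ, m)))) ∧
    (1 ∈ ({m, ℓ} : Set ℕ) → Nonempty (CircularGroup m ℓ ≃* Multiplicative ℤ)) ∧
    (1 ∈ ({m', ℓ'} : Set ℕ) → Nonempty (CircularGroup m' ℓ' ≃* Multiplicative ℤ)) := by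
  have : NeZero m := ⟨hm.ne'⟩
  have : NeZero ℓ := ⟨hℓ.ne'⟩
  have : NeZero m' := ⟨hm'.ne'⟩
  have : NeZero ℓ' := ⟨hℓ'.ne'⟩
  refine ⟨⟨fun ⟨e⟩ => ?_, ?_⟩, CircularGroup.nonempty_mulEquiv_int,
    CircularGroup.nonempty_mulEquiv_int⟩
  · simpa [eq_comm (a := 1)] using parameters_of_circularGroup_equiv e
  · rintro (⟨h, h'⟩ | h | h)
    · obtain ⟨e⟩ := CircularGroup.nonempty_mulEquiv_int h
      obtain ⟨e'⟩ := CircularGroup.nonempty_mulEquiv_int h'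
      exact ⟨e.trans e'.symm⟩
    · obtain ⟨rfl, rfl⟩ := Prod.mk.inj h
      exact ⟨MulEquiv.refl _⟩
    · obtain ⟨rfl, rfl⟩ := Prod.mk.inj h
      exact ⟨CircularGroup.swap _ _⟩
end

section
/- Let m and ℓ be positive integers. There exists a group isomorphism f : G(m,ℓ) → G(ℓ,m) such that for every i ∈ {0,…,m−1}, the image f(a_i) of the generator a_i of G(m,ℓ) is conjugate in G(ℓ,m) to one of the generators b_0,…,b_{ℓ−1} of G(ℓ,m). -/
/-!
The partial products `p n = a_0 ⋯ a_{n-1}`, continued to all `n : ℤ`, turn both conditions defining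
`G(m,ℓ)` into quasi-periodicity of `p`: the increments `(p n)⁻¹ * p (n + 1)` have period `m` iff
`p (n + m) = p m * p n`, and the products of `ℓ` consecutive increments all agree iff
`p (n + ℓ) = p n * p ℓ`. So `G(m,ℓ)` is the universal group carrying a path with these two
properties. Inversion exchanges left and right multiplication, hence `n ↦ (p (-n))⁻¹` exchanges
`m` and `ℓ`, and the two universal groups agree. Without the sign change, generators would be sent
to conjugates of inverses of generators.
-/

-- In `circWord` the cast is applied to the whole list `List.range p`, not to the summation index.
theorem circWord_eq_prod (m : ℕ) (i : ZMod m) (p : ℕ) :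
    circWord m i p = ((List.range p).map fun k : ℕ => FreeGroup.of (i + (k : ZMod m))).prod := by
  simp [circWord, List.map_eq_flatMap, List.flatMap_assoc]

section Paths

variable {G H : Type*} [Group G] [Group H]

/-- The `n`-th increment of a path `p` in a group: the factor that leads from `p n` to `p (n + 1)`
by multiplication on the right. -/
def increment (p : ℤ → G) (n : ℤ) : G := (p n)⁻¹ * p (n + 1)

/-- The partial products of a two-sided sequence `a`: the path that starts at `p 0 = 1` and has
increments `a`. For `n : ℕ` it is `a 0 * ⋯ * a (n - 1)` at `n` and `(a (-n) * ⋯ * a (-1))⁻¹`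
at `-n`. -/
def intPartialProd (a : ℤ → G) : ℤ → G
  | .ofNat n => ((List.range n).map fun k : ℕ => a k).prod
  | .negSucc n => ((List.range (n + 1)).map fun k => (a (.negSucc k))⁻¹).prod

theorem intPartialProd_zero (a : ℤ → G) : intPartialProd a 0 = 1 := rfl

theorem intPartialProd_add_one (a : ℤ → G) (n : ℤ) :
    intPartialProd a (n + 1) = intPartialProd a n * a n := by
  match n with
  | .ofNat n => exact List.prod_range_succ _ n
  | .negSucc 0 => simp [intPartialProd]
  | .negSucc (n + 1) =>
    rw [← mul_inv_eq_iff_eq_mul]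
    exact (List.prod_range_succ _ (n + 1)).symm

theorem increment_intPartialProd (a : ℤ → G) : increment (intPartialProd a) = a := by
  funext n
  rw [increment, intPartialProd_add_one, inv_mul_cancel_left]

theorem eq_of_increment_eq {p q : ℤ → G} (h_zero : p 0 = q 0) (h : increment p = increment q) :
    p = q := by
  have h_periodic : Function.Periodic (fun n => p n * (q n)⁻¹) 1 := fun n => by
    have hn : (p n)⁻¹ * p (n + 1) = (q n)⁻¹ * q (n + 1) := congrFun h n
    change p (n + 1) * (q (n + 1))⁻¹ = p n * (q n)⁻¹
    rw [mul_inv_eq_iff_eq_mul, mul_assoc, ← hn, mul_inv_cancel_left]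
  funext n
  rw [← mul_inv_eq_one]
  simpa [h_zero] using h_periodic.int_mul_eq n

theorem increment_map (f : G →* H) (p : ℤ → G) (n : ℤ) :
    increment (fun k => f (p k)) n = f (increment p n) := by
  simp only [increment, map_mul, map_inv]

theorem increment_const_mul (g : G) (p : ℤ → G) : increment (fun n => g * p n) = increment p := by
  funext n
  simp only [increment]
  group

theorem prod_increment (p : ℤ → G) (n : ℤ) (k : ℕ) :
    ((List.range k).map fun j : ℕ => increment p (n + j)).prod = (p n)⁻¹ * p (n + k) := by
  simpa [increment, add_assoc] using List.prod_range_div' k fun j : ℕ => (p (n + j))⁻¹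

theorem isConj_increment_reverse (p : ℤ → G) (n : ℤ) :
    IsConj (increment p (-n - 1)) (increment (fun k => (p (-k))⁻¹) n) := by
  refine isConj_iff.2 ⟨p (-n), ?_⟩
  simp only [increment, sub_add_cancel, neg_add']
  group

/-- The paths from `1` in a group whose increments satisfy the defining relations of `G(m,ℓ)`,
expressed by quasi-periodicity: a shift by `m` is a multiplication on the left and a shift by `ℓ` a
multiplication on the right. -/
structure IsCircularPath (m ℓ : ℕ) (p : ℤ → G) : Prop where
  map_zero : p 0 = 1
  map_add_left_period (n : ℤ) : p (n + m) = p m * p n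
  map_add_right_period (n : ℤ) : p (n + ℓ) = p n * p ℓ

end Paths

namespace IsCircularPath

variable {G : Type*} [Group G] {m ℓ : ℕ} {p : ℤ → G}

theorem reverse (hp : IsCircularPath m ℓ p) : IsCircularPath ℓ m fun n => (p (-n))⁻¹ where
  map_zero := by rw [neg_zero, hp.map_zero, inv_one]
  map_add_left_period n := by
    have h_neg : p (-ℓ) * p ℓ = 1 := by
      rw [← hp.map_add_right_period, neg_add_cancel, hp.map_zero]
    rw [eq_inv_of_mul_eq_one_left h_neg, ← mul_inv_rev, inv_inj, eq_mul_inv_iff_mul_eq,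
      ← hp.map_add_right_period, neg_add, neg_add_cancel_right]
  map_add_right_period n := by
    have h_neg : p m * p (-m) = 1 := by
      rw [← hp.map_add_left_period, neg_add_cancel, hp.map_zero]
    rw [eq_inv_of_mul_eq_one_right h_neg, ← mul_inv_rev, inv_inj, eq_inv_mul_iff_mul_eq,
      ← hp.map_add_left_period, neg_add, neg_add_cancel_right]

theorem increment_periodic (hp : IsCircularPath m ℓ p) : Function.Periodic (increment p) m := by
  intro n
  rw [increment, increment, add_right_comm, hp.map_add_left_period, hp.map_add_left_period]
  group

theorem increment_cast_intCast (hp : IsCircularPath m ℓ p) (n : ℤ) :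
    increment p ((n : ZMod m).cast : ℤ) = increment p n := by
  rw [ZMod.coe_intCast, Int.emod_def, mul_comm]
  exact hp.increment_periodic.sub_zsmul_eq (n / m)

theorem lift_increment_circWord (hp : IsCircularPath m ℓ p) (n : ℤ) (k : ℕ) :
    FreeGroup.lift (fun i : ZMod m => increment p i.cast) (circWord m n k) =
      (p n)⁻¹ * p (n + k) := by
  rw [← prod_increment, circWord_eq_prod, map_list_prod, List.map_map]
  congr 2
  funext j
  rw [Function.comp_apply, FreeGroup.lift_apply_of, ← Int.cast_natCast, ← Int.cast_add,
    hp.increment_cast_intCast]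

theorem lift_increment_eq_one (hp : IsCircularPath m ℓ p) :
    ∀ r ∈ circRels m ℓ, FreeGroup.lift (fun i : ZMod m => increment p i.cast) r = 1 := by
  rintro r ⟨i, rfl⟩
  obtain ⟨n, rfl⟩ := ZMod.intCast_surjective i
  rw [map_mul, map_inv, mul_inv_eq_one, ← Int.cast_one, ← Int.cast_add,
    hp.lift_increment_circWord, hp.lift_increment_circWord, hp.map_add_right_period,
    hp.map_add_right_period, inv_mul_cancel_left, inv_mul_cancel_left]

/-- The universal property of `G(m,ℓ)`: the homomorphism sending each generator `a_n` to the `n`-th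
increment of a given circular path. -/
def lift (hp : IsCircularPath m ℓ p) : CircularGroup m ℓ →* G :=
  PresentedGroup.toGroup hp.lift_increment_eq_one

theorem lift_circGen (hp : IsCircularPath m ℓ p) (n : ℤ) :
    hp.lift (circGen m ℓ n) = increment p n := by
  rw [lift, circGen, PresentedGroup.toGroup.of, hp.increment_cast_intCast]

end IsCircularPath

/-- The universal circular path in `G(m,ℓ)`, formed by the partial products of
`…, a_{-1}, a_0, a_1, …`. -/
def circPath (m ℓ : ℕ) : ℤ → CircularGroup m ℓ := intPartialProd fun n => circGen m ℓ n

section CircPath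

variable (m ℓ : ℕ)

theorem circPath_zero : circPath m ℓ 0 = 1 := intPartialProd_zero _

theorem increment_circPath (n : ℤ) : increment (circPath m ℓ) n = circGen m ℓ n :=
  congrFun (increment_intPartialProd _) n

theorem mk_circWord (n : ℤ) (k : ℕ) :
    PresentedGroup.mk (circRels m ℓ) (circWord m n k) =
      (circPath m ℓ n)⁻¹ * circPath m ℓ (n + k) := by
  simp only [← prod_increment, increment_circPath, circWord_eq_prod, map_list_prod, List.map_map,
    Int.cast_add, Int.cast_natCast]
  rfl

theorem circPath_add_left_period (n : ℤ) :
    circPath m ℓ (n + m) = circPath m ℓ m * circPath m ℓ n := by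
  suffices h : (fun n => circPath m ℓ (n + m)) = fun n => circPath m ℓ m * circPath m ℓ n from
    congrFun h n
  apply eq_of_increment_eq
  · rw [zero_add, circPath_zero, mul_one]
  · rw [increment_const_mul]
    funext k
    calc increment (fun n => circPath m ℓ (n + m)) k
        = increment (circPath m ℓ) (k + m) := by simp only [increment, add_right_comm]
      _ = increment (circPath m ℓ) k := by simp [increment_circPath]

theorem circPath_add_right_period (n : ℤ) :
    circPath m ℓ (n + ℓ) = circPath m ℓ n * circPath m ℓ ℓ := by
  have h_periodic :
      Function.Periodic (fun n => (circPath m ℓ n)⁻¹ * circPath m ℓ (n + ℓ)) 1 := fun k => by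
    have h_rel := PresentedGroup.one_of_mem (rels := circRels m ℓ) ⟨k, rfl⟩
    rw [map_mul, map_inv, mul_inv_eq_one, ← Int.cast_one, ← Int.cast_add, mk_circWord,
      mk_circWord] at h_rel
    exact h_rel.symm
  rw [← inv_mul_eq_iff_eq_mul]
  simpa [circPath_zero] using h_periodic.int_mul_eq n

theorem isCircularPath_circPath : IsCircularPath m ℓ (circPath m ℓ) where
  map_zero := circPath_zero m ℓ
  map_add_left_period := circPath_add_left_period m ℓ
  map_add_right_period := circPath_add_right_period m ℓ

variable {m ℓ}

theorem IsCircularPath.lift_circPath {G : Type*} [Group G] {p : ℤ → G}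
    (hp : IsCircularPath m ℓ p) (n : ℤ) : hp.lift (circPath m ℓ n) = p n := by
  suffices h : (fun n => hp.lift (circPath m ℓ n)) = p from congrFun h n
  apply eq_of_increment_eq
  · rw [circPath_zero, map_one, hp.map_zero]
  · funext k
    rw [increment_map, increment_circPath, hp.lift_circGen]

theorem monoidHom_ext_circPath {G : Type*} [Group G] {f g : CircularGroup m ℓ →* G}
    (h : ∀ n, f (circPath m ℓ n) = g (circPath m ℓ n)) : f = g := by
  refine PresentedGroup.ext fun i => ?_
  obtain ⟨n, rfl⟩ := ZMod.intCast_surjective i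
  change f (circGen m ℓ n) = g (circGen m ℓ n)
  rw [← increment_circPath, ← increment_map, ← increment_map, funext h]

end CircPath

section Swap

variable (m ℓ : ℕ)

/-- The homomorphism `G(m,ℓ) → G(ℓ,m)` induced by the reverse of the universal circular path in
`G(ℓ,m)`. -/
def circSwap : CircularGroup m ℓ →* CircularGroup ℓ m :=
  (isCircularPath_circPath ℓ m).reverse.lift

theorem circSwap_circPath (n : ℤ) :
    circSwap m ℓ (circPath m ℓ n) = (circPath ℓ m (-n))⁻¹ :=
  (isCircularPath_circPath ℓ m).reverse.lift_circPath n

theorem circSwap_comp_circSwap : (circSwap ℓ m).comp (circSwap m ℓ) = MonoidHom.id _ :=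
  monoidHom_ext_circPath fun n => by
    rw [MonoidHom.comp_apply, circSwap_circPath, map_inv, circSwap_circPath, inv_inv, neg_neg,
      MonoidHom.id_apply]

/-- The isomorphism `G(m,ℓ) ≃ G(ℓ,m)` obtained by reversing the universal circular paths. -/
def circSwapEquiv : CircularGroup m ℓ ≃* CircularGroup ℓ m :=
  (circSwap m ℓ).toMulEquiv (circSwap ℓ m) (circSwap_comp_circSwap m ℓ)
    (circSwap_comp_circSwap ℓ m)

theorem isConj_circSwapEquiv_circGen (n : ℤ) :
    IsConj (circGen ℓ m (-n - 1 : ℤ)) (circSwapEquiv m ℓ (circGen m ℓ n)) := by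
  rw [circSwapEquiv, MonoidHom.toMulEquiv_apply, circSwap, IsCircularPath.lift_circGen,
    ← increment_circPath]
  exact isConj_increment_reverse (circPath ℓ m) n

end Swap

/-- There is a group isomorphism `G(m,ℓ) ≃ G(ℓ,m)` sending each generator `a_i` of
`G(m,ℓ)` to a conjugate of one of the generators `b_j` of `G(ℓ,m)`. -/
theorem isomorphism_circular_group (m ℓ : ℕ) (hm : 0 < m) (hℓ : 0 < ℓ) :
    ∃ f : CircularGroup m ℓ ≃* CircularGroup ℓ m,
      ∀ i : ZMod m, ∃ j : ZMod ℓ, IsConj (circGen ℓ m j) (f (circGen m ℓ i)) := by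
  refine ⟨circSwapEquiv m ℓ, fun i => ?_⟩
  obtain ⟨n, rfl⟩ := ZMod.intCast_surjective i
  exact ⟨(-n - 1 : ℤ), isConj_circSwapEquiv_circGen m ℓ n⟩
end

section
/- Let m and ℓ be positive integers, let i, i′ ∈ {0,…,m−1} and p, p′ ∈ {0,…,ℓ}. In the monoid M(m,ℓ), the element s(i,p) left-divides s(i′,p′) (i.e. there exists c ∈ M(m,ℓ) with s(i,p)·c = s(i′,p′)) if and only if (i = i′ and p ≤ p′), or p = 0, or p′ = ℓ. -/
/-- The word `a_i a_{i+1} ⋯ a_{i+p-1}` (indices mod `m`) in the free monoid on `ZMod m`. -/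
def circMWord (m : ℕ) (i : ZMod m) (p : ℕ) : FreeMonoid (ZMod m) :=
  ((List.range p).map (fun k => FreeMonoid.of (i + (k : ZMod m)))).prod

/-- The defining relations of the circular monoid `M(m,ℓ)`. -/
def circMRels (m ℓ : ℕ) : FreeMonoid (ZMod m) → FreeMonoid (ZMod m) → Prop :=
  fun x y => ∃ i : ZMod m, x = circMWord m i ℓ ∧ y = circMWord m (i + 1) ℓ

/-- The circular monoid `M(m,ℓ)`. -/
abbrev CircularMonoid (m ℓ : ℕ) := PresentedMonoid (circMRels m ℓ)

/-- The element `s(i,p) = a_i a_{i+1} ⋯ a_{i+p-1}` of the circular monoid `M(m,ℓ)`. -/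
def circMS (m ℓ : ℕ) (i : ZMod m) (p : ℕ) : CircularMonoid m ℓ :=
  PresentedMonoid.mk (circMRels m ℓ) (circMWord m i p)

/-- The Garside element `Δ = s(0,ℓ)` of the circular monoid `M(m,ℓ)`. -/
def circMDelta (m ℓ : ℕ) : CircularMonoid m ℓ := circMS m ℓ 0 ℓ

/-!
Both sides of every relation `s(i,ℓ) = s(i+1,ℓ)` have length `ℓ`, so a word shorter than `ℓ` is
alone in its class, and divisibility below it is the prefix order on words. At length `ℓ` the
relations make all the `s(i,ℓ)` equal to the single element `Δ`, which every `s(i,p)` with `p ≤ ℓ`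
divides.
-/

section FreeMonoid

variable {α : Type*} {ℓ : ℕ}

theorem freeMonoid_length_le_of_dvd {x y : FreeMonoid α} (h : x ∣ y) : x.length ≤ y.length := by
  obtain ⟨w, rfl⟩ := h
  simp only [FreeMonoid.length_mul, Nat.le_add_right]

theorem eq_of_of_mul_dvd_of_mul {a b : α} {x y : FreeMonoid α}
    (h : FreeMonoid.of a * x ∣ FreeMonoid.of b * y) : a = b := by
  obtain ⟨w, hw⟩ := h
  rw [mul_assoc] at hw
  exact (List.cons.inj hw).1.symm

/-- The Rees congruence of the ideal of words of length at least `ℓ`: it collapses this ideal to a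
point and identifies nothing else. -/
def longWordCon (α : Type*) (ℓ : ℕ) : Con (FreeMonoid α) where
  r x y := x = y ∨ (ℓ ≤ x.length ∧ ℓ ≤ y.length)
  iseqv := ⟨fun _ => Or.inl rfl, by grind, by grind⟩
  mul' := by
    simp only [FreeMonoid.length_mul]
    grind

variable {r : FreeMonoid α → FreeMonoid α → Prop}

theorem conGen_le_longWordCon (hr : ∀ x y, r x y → ℓ ≤ x.length ∧ ℓ ≤ y.length) :
    conGen r ≤ longWordCon α ℓ :=
  Con.conGen_le.2 fun x y hxy => Or.inr (hr x y hxy)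

theorem eq_of_mk_eq_mk_of_length_lt (hr : ∀ x y, r x y → ℓ ≤ x.length ∧ ℓ ≤ y.length)
    {x y : FreeMonoid α} (hx : x.length < ℓ)
    (h : PresentedMonoid.mk r x = PresentedMonoid.mk r y) : x = y :=
  (conGen_le_longWordCon hr ((Con.eq _).1 h)).resolve_right fun hlong => hlong.1.not_gt hx

theorem mk_dvd_mk_iff_of_length_lt (hr : ∀ x y, r x y → ℓ ≤ x.length ∧ ℓ ≤ y.length)
    {x y : FreeMonoid α} (hy : y.length < ℓ) :
    PresentedMonoid.mk r x ∣ PresentedMonoid.mk r y ↔ x ∣ y := by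
  refine ⟨?_, map_dvd (PresentedMonoid.mk r)⟩
  rintro ⟨c, hc⟩
  induction c with | _ w
  exact ⟨w, eq_of_mk_eq_mk_of_length_lt hr hy (by rwa [map_mul])⟩

end FreeMonoid

section CircularMonoid

variable (m : ℕ) (i : ZMod m)

theorem toList_circMWord (p : ℕ) :
    (circMWord m i p).toList = (List.range p).map fun k : ℕ => i + (k : ZMod m) := by
  -- Not a mere unfolding: the cast in `circMWord` elaborates as a monadic coercion of the whole
  -- list `List.range p`.
  induction p with
  | zero => rfl
  | succ p ih =>
    rw [List.range_succ, List.map_append, ← ih]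
    simp [circMWord, List.range_succ]

theorem length_circMWord (p : ℕ) : (circMWord m i p).length = p := by
  rw [FreeMonoid.length, toList_circMWord, List.length_map, List.length_range]

theorem circMWord_zero : circMWord m i 0 = 1 := rfl

theorem circMWord_one : circMWord m i 1 = FreeMonoid.of i := by
  simp [circMWord]

theorem circMWord_add (p q : ℕ) :
    circMWord m i (p + q) = circMWord m i p * circMWord m (i + p) q := by
  apply FreeMonoid.toList.injective
  simp [toList_circMWord, List.range_add, Function.comp_def, add_assoc]

theorem circMWord_succ (p : ℕ) :
    circMWord m i (p + 1) = FreeMonoid.of i * circMWord m (i + 1) p := by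
  rw [add_comm, circMWord_add, circMWord_one, Nat.cast_one]

theorem circMWord_dvd_circMWord_of_le {p q : ℕ} (h : p ≤ q) :
    circMWord m i p ∣ circMWord m i q := by
  obtain ⟨k, rfl⟩ := Nat.exists_eq_add_of_le h
  exact ⟨_, circMWord_add m i p k⟩

variable {m i}

theorem circMWord_dvd_circMWord_iff {j : ZMod m} {p q : ℕ} :
    circMWord m i p ∣ circMWord m j q ↔ (i = j ∧ p ≤ q) ∨ p = 0 := by
  constructor
  · intro h
    have hle : p ≤ q := by
      simpa only [length_circMWord] using freeMonoid_length_le_of_dvd h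
    match p, q with
    | 0, _ => exact Or.inr rfl
    | p + 1, q + 1 =>
      rw [circMWord_succ, circMWord_succ] at h
      exact Or.inl ⟨eq_of_of_mul_dvd_of_mul h, hle⟩
  · rintro (⟨rfl, hle⟩ | rfl)
    · exact circMWord_dvd_circMWord_of_le m i hle
    · rw [circMWord_zero]
      exact one_dvd _

variable {ℓ : ℕ}

theorem le_length_of_circMRels (x y : FreeMonoid (ZMod m)) (h : circMRels m ℓ x y) :
    ℓ ≤ x.length ∧ ℓ ≤ y.length := by
  obtain ⟨i, rfl, rfl⟩ := h
  simp only [length_circMWord, le_refl, and_self]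

theorem circMS_dvd_circMS_iff_of_lt {j : ZMod m} {p q : ℕ} (hq : q < ℓ) :
    circMS m ℓ i p ∣ circMS m ℓ j q ↔ (i = j ∧ p ≤ q) ∨ p = 0 :=
  (mk_dvd_mk_iff_of_length_lt le_length_of_circMRels (by rwa [length_circMWord])).trans
    circMWord_dvd_circMWord_iff

variable (m ℓ) in
theorem periodic_circMS_length : Function.Periodic (fun i => circMS m ℓ i ℓ) 1 := fun i =>
  ((Con.eq _).2 (ConGen.Rel.of _ _ ⟨i, rfl, rfl⟩)).symm

variable (m ℓ i) in
theorem circMS_length_eq_circMDelta : circMS m ℓ i ℓ = circMDelta m ℓ := by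
  obtain ⟨n, rfl⟩ := ZMod.intCast_surjective i
  rw [circMDelta, ← mul_one (n : ZMod m)]
  exact (periodic_circMS_length m ℓ).int_mul_eq n

theorem circMS_dvd_circMDelta {p : ℕ} (hp : p ≤ ℓ) : circMS m ℓ i p ∣ circMDelta m ℓ := by
  rw [← circMS_length_eq_circMDelta m i]
  exact map_dvd (PresentedMonoid.mk _) (circMWord_dvd_circMWord_of_le m i hp)

end CircularMonoid

/-- Left-divisibility of simple elements in the circular monoid: `s(i,p)` left-divides
`s(i',p')` iff `i = i'` and `p ≤ p'`, or `p = 0`, or `p' = ℓ`. -/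
theorem left_divisibility_simples (m ℓ : ℕ) (hm : 0 < m) (hℓ : 0 < ℓ)
    (i i' : ZMod m) (p p' : ℕ) (hp : p ≤ ℓ) (hp' : p' ≤ ℓ) :
    (∃ c : CircularMonoid m ℓ, circMS m ℓ i p * c = circMS m ℓ i' p') ↔
      ((i = i' ∧ p ≤ p') ∨ p = 0 ∨ p' = ℓ) := by
  have dvd_iff : (∃ c, circMS m ℓ i p * c = circMS m ℓ i' p') ↔
      circMS m ℓ i p ∣ circMS m ℓ i' p' := exists_congr fun _ => eq_comm
  rw [dvd_iff]
  rcases hp'.lt_or_eq with hlt | rfl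
  · rw [circMS_dvd_circMS_iff_of_lt hlt, ← or_assoc, or_iff_left hlt.ne]
  · rw [circMS_length_eq_circMDelta]
    exact iff_of_true (circMS_dvd_circMDelta hp) (Or.inr (Or.inr rfl))
end
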